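/- Let ρ > 0, c > 0, x₀ ≥ 0, b₀ > 0, and let F : ℝ → ℝ be continuously differentiable with F(0) = 0, F'(0) < 0, −b₀ ≤ F'(y) ≤ 0 for all y ∈ ℝ, and lim_{y→+∞} F'(y) = −l for some l > 0. Let V(x₀) be the supremum of B(u,x) over all admissible controls u and trajectories x associated with u for which the integrand of B is Lebesgue integrable (this supremum is a real number). Then there exist admissible controls v_n (n ∈ ℕ), an admissible control v, trajectories x_n associated with v_n with integrable objective integrands, and for each T ∈ ℕ positive real numbers η_T ≤ N_T, such that: (i) B(v_n, x_n) → V(x₀) as n → ∞; (ii) for every T > 0, v_n converges to v weakly in L¹([0,T]), i.e. ∫₀^T v_n(t) g(t) dt → ∫₀^T v(t) g(t) dt for every bounded measurable g : [0,T] → ℝ; (iii) for every T ∈ ℕ, for a.e. t ∈ [0,T] one has η_T ≤ v(t) ≤ N_T and η_T ≤ v_n(t) ≤ N_T for all n ≥ T. -/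

import Mathlib

open MeasureTheory Filter

/-- A control `u` is admissible: measurable, locally integrable on `[0,∞)`,
and positive almost everywhere on `[0,∞)`. -/
def Admissible (u : ℝ → ℝ) : Prop :=
  Measurable u ∧ (∀ T : ℝ, 0 < T → IntegrableOn u (Set.Icc 0 T)) ∧
    (∀ᵐ t ∂(volume.restrict (Set.Ici (0:ℝ))), 0 < u t)

/-- `x` is a trajectory associated with the control `u`, dynamics `F` and
initial state `x₀`. -/
def Trajectory (F : ℝ → ℝ) (x₀ : ℝ) (u x : ℝ → ℝ) : Prop :=
  ContinuousOn x (Set.Ici 0) ∧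
    ∀ t : ℝ, 0 ≤ t → x t = x₀ + ∫ s in (0:ℝ)..t, (F (x s) + u s)

/-- The objective functional `B(u,x) = ∫₀^∞ e^{-ρt}(log u(t) - c x(t)²) dt`. -/
noncomputable def objective (ρ c : ℝ) (u x : ℝ → ℝ) : ℝ :=
  ∫ t in Set.Ioi (0:ℝ), Real.exp (-ρ * t) * (Real.log (u t) - c * (x t) ^ 2)

/-- Integrability of the integrand of the objective functional. -/
def ObjIntegrable (ρ c : ℝ) (u x : ℝ → ℝ) : Prop :=
  IntegrableOn (fun t => Real.exp (-ρ * t) * (Real.log (u t) - c * (x t) ^ 2))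
    (Set.Ioi (0:ℝ))

/-!
Let `(u, x)` be a control–trajectory pair with objective at least `B₀`. Differentiating
`e^{-ρt} arctan (x t)` bounds `∫ e^{-ρt} u / (1 + x²)` independently of the control, because the
drift `F x ≥ -b x` contributes at most `b`. As `log u ≤ u / (1 + x²) + (c/2) x² + const`, the
discounted `L²` norm of `x` is then bounded in terms of `B₀` alone, and so is `e^{-ρt} x t`.

Such a pair can be improved in two steps. Raising `u` to at least `a e^{-ρt}`, with extra discounted
mass `Z`, gains `Z / a` in the logarithm and costs only `O(Z)` in the state, so it pays for small
`a`. Truncating `u` at `A e^{(b+ρ)t}` loses at most `(u - min u N) / N` in the logarithm, while the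
removed mass decays only at rate `b` and lowers the state cost meanwhile; a multiplier
solving an adjoint equation shows that this pays for large `A`. In both steps the control is
corrected by the change of drift, so that the perturbed trajectory is explicit.

Hence some maximizing sequence lies between `a e^{-ρt}` and `A e^{(b+ρ)t}`. Both bounds are square
integrable for `e^{-κt} dt` when `κ` is large, so a subsequence converges weakly in this `L²` space,
and the bounds pass to the weak limit.
-/

/-! ### Locally absolutely continuous functions -/

/-- `y` is a locally absolutely continuous function on `ℝ` with almost everywhere derivative `f`.
These are the functions to which the fundamental theorem of calculus applies; trajectories are of
this kind. -/
structure IsPrimitive (f y : ℝ → ℝ) : Prop where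
  absolutelyContinuousOnInterval : ∀ a b, AbsolutelyContinuousOnInterval y a b
  ae_hasDerivAt : ∀ᵐ t, HasDerivAt y (f t) t

theorem absolutelyContinuousOnInterval_comp {K : NNReal} {φ y : ℝ → ℝ} {a b : ℝ}
    (hφ : LipschitzWith K φ) (hy : AbsolutelyContinuousOnInterval y a b) :
    AbsolutelyContinuousOnInterval (fun t => φ (y t)) a b := by
  refine squeeze_zero (fun _ => by positivity) (fun _ => ?_)
    (by simpa using Tendsto.const_mul (K : ℝ) hy)
  rw [Finset.mul_sum]
  exact Finset.sum_le_sum fun i _ => hφ.dist_le_mul _ _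

namespace IsPrimitive

variable {f g y z : ℝ → ℝ}

theorem of_hasDerivAt (hy : ∀ t, HasDerivAt y (f t) t) (hf : Continuous f) : IsPrimitive f y where
  absolutelyContinuousOnInterval a b := by
    have hdiff : ContDiff ℝ 1 y :=
      contDiff_one_iff_deriv.2 ⟨fun t => (hy t).differentiableAt, by rwa [deriv_eq hy]⟩
    exact hdiff.contDiffOn.absolutelyContinuousOnInterval
  ae_hasDerivAt := ae_of_all _ hy

theorem of_eq_integral (hf : LocallyIntegrable f) {C : ℝ}
    (hy : ∀ t, y t = C + ∫ s in (0 : ℝ)..t, f s) : IsPrimitive f y where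
  absolutelyContinuousOnInterval a b := by
    have hint (a b : ℝ) : IntervalIntegrable f volume a b :=
      (hf.integrableOn_isCompact isCompact_uIcc).intervalIntegrable
    have hconst : AbsolutelyContinuousOnInterval (fun _ => y a) a b :=
      contDiff_const.contDiffOn.absolutelyContinuousOnInterval
    have hya : y = fun t => y a + ∫ s in a..t, f s := funext fun t => by
      rw [hy, hy a, add_assoc, intervalIntegral.integral_add_adjacent_intervals (hint 0 a)
        (hint a t)]
    rw [hya]
    exact hconst.fun_add
      ((hint a b).absolutelyContinuousOnInterval_intervalIntegral Set.left_mem_uIcc)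
  ae_hasDerivAt := by
    filter_upwards [LocallyIntegrable.ae_hasDerivAt_integral hf] with t ht
    exact ((ht 0).const_add C).congr_of_eventuallyEq (Eventually.of_forall hy)

theorem continuous (hy : IsPrimitive f y) : Continuous y := by
  refine continuous_iff_continuousAt.2 fun t => ?_
  refine (hy.absolutelyContinuousOnInterval (t - 1) (t + 1)).continuousOn.continuousAt ?_
  rw [Set.uIcc_of_le (by linarith)]
  exact Icc_mem_nhds (by linarith) (by linarith)

theorem intervalIntegrable (hy : IsPrimitive f y) (a b : ℝ) : IntervalIntegrable f volume a b := by
  refine (hy.absolutelyContinuousOnInterval a b).intervalIntegrable_deriv.congr_ae ?_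
  filter_upwards [ae_restrict_of_ae hy.ae_hasDerivAt] with t ht using ht.deriv

theorem integral_eq_sub (hy : IsPrimitive f y) (a b : ℝ) : ∫ t in a..b, f t = y b - y a := by
  rw [← (hy.absolutelyContinuousOnInterval a b).integral_deriv_eq_sub]
  refine intervalIntegral.integral_congr_ae ?_
  filter_upwards [hy.ae_hasDerivAt] with t ht _ using ht.deriv.symm

theorem locallyIntegrable (hy : IsPrimitive f y) :
    LocallyIntegrable f := fun t =>
  ⟨Set.Icc (t - 1) (t + 1), Icc_mem_nhds (by linarith) (by linarith),
    (intervalIntegrable_iff_integrableOn_Icc_of_le (by linarith)).1 (hy.intervalIntegrable _ _)⟩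

theorem integral_le_sub {s t : ℝ} (hy : IsPrimitive f y) (hst : s ≤ t)
    (hg : IntervalIntegrable g volume s t) (hle : ∀ r ∈ Set.Icc s t, g r ≤ f r) :
    ∫ r in s..t, g r ≤ y t - y s := by
  rw [← hy.integral_eq_sub]
  exact intervalIntegral.integral_mono_on hst hg (hy.intervalIntegrable s t) hle

theorem congr_deriv (hy : IsPrimitive f y) (hfg : ∀ t, f t = g t) : IsPrimitive g y :=
  funext hfg ▸ hy

theorem neg (hy : IsPrimitive f y) : IsPrimitive (fun t => -f t) (fun t => -y t) where
  absolutelyContinuousOnInterval a b := (hy.absolutelyContinuousOnInterval a b).fun_neg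
  ae_hasDerivAt := hy.ae_hasDerivAt.mono fun _ ht => ht.fun_neg

theorem add (hy : IsPrimitive f y) (hz : IsPrimitive g z) :
    IsPrimitive (fun t => f t + g t) (fun t => y t + z t) where
  absolutelyContinuousOnInterval a b :=
    (hy.absolutelyContinuousOnInterval a b).fun_add (hz.absolutelyContinuousOnInterval a b)
  ae_hasDerivAt := by
    filter_upwards [hy.ae_hasDerivAt, hz.ae_hasDerivAt] with t hyt hzt using hyt.fun_add hzt

theorem mul (hy : IsPrimitive f y) (hz : IsPrimitive g z) :
    IsPrimitive (fun t => f t * z t + y t * g t) (fun t => y t * z t) where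
  absolutelyContinuousOnInterval a b :=
    (hy.absolutelyContinuousOnInterval a b).fun_mul (hz.absolutelyContinuousOnInterval a b)
  ae_hasDerivAt := by
    filter_upwards [hy.ae_hasDerivAt, hz.ae_hasDerivAt] with t hyt hzt using hyt.fun_mul hzt

theorem lipschitz_comp {K : NNReal} {φ φ' : ℝ → ℝ} (hφ : LipschitzWith K φ)
    (hφ' : ∀ s, HasDerivAt φ (φ' s) s) (hy : IsPrimitive f y) :
    IsPrimitive (fun t => φ' (y t) * f t) (fun t => φ (y t)) where
  absolutelyContinuousOnInterval a b :=
    absolutelyContinuousOnInterval_comp hφ (hy.absolutelyContinuousOnInterval a b)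
  ae_hasDerivAt := hy.ae_hasDerivAt.mono fun t ht => (hφ' (y t)).comp t ht

end IsPrimitive

theorem isPrimitive_exp (k : ℝ) :
    IsPrimitive (fun t => k * Real.exp (k * t)) (fun t => Real.exp (k * t)) :=
  .of_hasDerivAt (fun t => by simpa [mul_comm] using ((hasDerivAt_id t).const_mul k).exp)
    (by fun_prop)

/-! ### The discounted measure -/

/-- The measure `e^{-ρt} dt` on `[0, ∞)`: the objective is the integral of `log u - c x²` against
it. -/
noncomputable def discount (ρ : ℝ) : Measure ℝ :=
  (volume.restrict (Set.Ioi 0)).withDensity fun t => ENNReal.ofReal (Real.exp (-ρ * t))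

section Discount

variable {ρ C : ℝ} {f : ℝ → ℝ}

theorem ae_discount_iff {p : ℝ → Prop} :
    (∀ᵐ t ∂discount ρ, p t) ↔ ∀ᵐ t ∂volume.restrict (Set.Ioi 0), p t := by
  rw [discount, ae_withDensity_iff (by fun_prop)]
  simp only [ne_eq, ENNReal.ofReal_eq_zero, not_le, Real.exp_pos, true_imp_iff]

theorem ae_discount_of_forall_nonneg {p : ℝ → Prop} (hp : ∀ t, 0 ≤ t → p t) :
    ∀ᵐ t ∂discount ρ, p t :=
  ae_discount_iff.2 <| (ae_restrict_mem measurableSet_Ioi).mono fun t ht => hp t (le_of_lt ht)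

theorem integrable_discount_iff :
    Integrable f (discount ρ) ↔ IntegrableOn (fun t => Real.exp (-ρ * t) * f t) (Set.Ioi 0) := by
  rw [discount, integrable_withDensity_iff_integrable_smul' (by fun_prop) (by simp)]
  simp [IntegrableOn, Real.exp_nonneg]

theorem integral_discount (ρ : ℝ) (f : ℝ → ℝ) :
    ∫ t, f t ∂discount ρ = ∫ t in Set.Ioi 0, Real.exp (-ρ * t) * f t := by
  rw [discount, integral_withDensity_eq_integral_toReal_smul (by fun_prop) (by simp)]
  simp [Real.exp_nonneg]

theorem isFiniteMeasure_discount (hρ : 0 < ρ) : IsFiniteMeasure (discount ρ) := by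
  have hone : Integrable (fun _ => (1 : ℝ)) (discount ρ) := by
    simpa [integrable_discount_iff] using integrableOn_exp_mul_Ioi (neg_lt_zero.2 hρ) 0
  exact (integrable_const_iff_isFiniteMeasure one_ne_zero).1 hone

theorem integral_discount_const (hρ : 0 < ρ) (C : ℝ) : ∫ _, C ∂discount ρ = C / ρ := by
  rw [integral_discount, integral_mul_const, integral_exp_mul_Ioi (neg_lt_zero.2 hρ)]
  simp [div_eq_inv_mul]

theorem intervalIntegral_tendsto_integral_discount (hf : Integrable f (discount ρ)) :
    Tendsto (fun T => ∫ t in (0 : ℝ)..T, Real.exp (-ρ * t) * f t) atTop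
      (nhds (∫ t, f t ∂discount ρ)) := by
  rw [integral_discount]
  exact intervalIntegral_tendsto_integral_Ioi 0 (integrable_discount_iff.1 hf) tendsto_id

theorem integrable_discount_of_intervalIntegral_le
    (hf : ∀ T, IntervalIntegrable (fun t => Real.exp (-ρ * t) * f t) volume 0 T)
    (hf0 : ∀ t, 0 ≤ t → 0 ≤ f t)
    (hC : ∀ T, 0 ≤ T → ∫ t in (0 : ℝ)..T, Real.exp (-ρ * t) * f t ≤ C) :
    Integrable f (discount ρ) := by
  refine integrable_discount_iff.2 <| integrableOn_Ioi_of_intervalIntegral_norm_bounded C 0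
    (fun T => (hf T).1) tendsto_id ((eventually_ge_atTop 0).mono fun T hT => ?_)
  refine le_of_eq_of_le (intervalIntegral.integral_congr fun t ht => ?_) (hC T hT)
  rw [Set.uIcc_of_le hT] at ht
  exact Real.norm_of_nonneg (mul_nonneg (Real.exp_nonneg _) (hf0 t ht.1))

theorem integral_discount_le_of_intervalIntegral_le (hf : Integrable f (discount ρ))
    (hC : ∀ T, 0 ≤ T → ∫ t in (0 : ℝ)..T, Real.exp (-ρ * t) * f t ≤ C) :
    ∫ t, f t ∂discount ρ ≤ C :=
  le_of_tendsto (intervalIntegral_tendsto_integral_discount hf)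
    ((eventually_ge_atTop 0).mono hC)

theorem intervalIntegral_le_integral_discount (hf : Integrable f (discount ρ))
    (hf0 : ∀ t, 0 ≤ t → 0 ≤ f t) {a b : ℝ} (ha : 0 ≤ a) (hab : a ≤ b) :
    ∫ t in a..b, Real.exp (-ρ * t) * f t ≤ ∫ t, f t ∂discount ρ := by
  rw [intervalIntegral.integral_of_le hab, integral_discount]
  refine setIntegral_mono_set (integrable_discount_iff.1 hf) ?_
    (LE.le.eventuallyLE fun t (ht : t ∈ Set.Ioc a b) => ha.trans_lt ht.1)
  filter_upwards [ae_restrict_mem measurableSet_Ioi] with t ht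
  exact mul_nonneg (Real.exp_nonneg _) (hf0 t (le_of_lt ht))

theorem objIntegrable_iff {c : ℝ} {u x : ℝ → ℝ} :
    ObjIntegrable ρ c u x ↔ Integrable (fun t => Real.log (u t) - c * x t ^ 2) (discount ρ) :=
  integrable_discount_iff.symm

theorem objective_eq_integral_discount (ρ c : ℝ) (u x : ℝ → ℝ) :
    objective ρ c u x = ∫ t, (Real.log (u t) - c * x t ^ 2) ∂discount ρ :=
  (integral_discount ρ _).symm

end Discount

/-! ### Weak compactness -/

section WeakCompactness

theorem exists_subseq_tendsto_inner {H : Type*} [NormedAddCommGroup H] [InnerProductSpace ℝ H]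
    [CompleteSpace H] [TopologicalSpace.SeparableSpace H] {v : ℕ → H} {R : ℝ}
    (hv : ∀ n, ‖v n‖ ≤ R) :
    ∃ (w : H) (φ : ℕ → ℕ), StrictMono φ ∧
      ∀ g : H, Tendsto (fun n => inner ℝ (v (φ n)) g) atTop (nhds (inner ℝ w g)) := by
  obtain ⟨d, -, φ, hφ, hd⟩ := WeakDual.isSeqCompact_closedBall ℝ H 0 R
    (x := fun n => StrongDual.toWeakDual (InnerProductSpace.toDual ℝ H (v n)))
    (fun n => by simp [hv n])
  refine ⟨(InnerProductSpace.toDual ℝ H).symm (WeakDual.toStrongDual d), φ, hφ, fun g => ?_⟩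
  simpa [Function.comp_def] using ((WeakDual.eval_continuous g).tendsto d).comp hd

variable {α : Type*} [MeasurableSpace α] {μ : Measure α} {v : ℕ → α → ℝ} {lo hi w : α → ℝ}

theorem ae_le_of_tendsto_integral_mul (hv : ∀ n, MemLp (v n) 2 μ) (hw : MemLp w 2 μ)
    (hhi : MemLp hi 2 μ) (hle : ∀ n, v n ≤ᵐ[μ] hi)
    (hlim : ∀ g, MemLp g 2 μ →
      Tendsto (fun n => ∫ t, v n t * g t ∂μ) atTop (nhds (∫ t, w t * g t ∂μ))) :
    w ≤ᵐ[μ] hi := by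
  have hg : MemLp (fun t => max (w t - hi t) 0) 2 μ := (hw.sub hhi).pos_part
  have hint {f : α → ℝ} (hf : MemLp f 2 μ) : Integrable (fun t => f t * max (w t - hi t) 0) μ :=
    hf.integrable_mul hg
  have hle_int : ∫ t, w t * max (w t - hi t) 0 ∂μ ≤ ∫ t, hi t * max (w t - hi t) 0 ∂μ :=
    le_of_tendsto' (hlim _ hg) fun n => integral_mono_ae (hint (hv n)) (hint hhi) <|
      (hle n).mono fun t ht => mul_le_mul_of_nonneg_right ht (le_max_right _ _)
  have hsq : ∫ t, max (w t - hi t) 0 ^ 2 ∂μ ≤ 0 := by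
    rw [← sub_nonpos, ← integral_sub (hint hw) (hint hhi)] at hle_int
    refine le_of_eq_of_le (integral_congr_ae (ae_of_all _ fun t => ?_)) hle_int
    rcases le_total (w t - hi t) 0 with h | h <;> simp only [h, max_eq_left, max_eq_right] <;> ring
  filter_upwards [(integral_eq_zero_iff_of_nonneg (fun t => sq_nonneg _) hg.integrable_sq).1
    (hsq.antisymm (integral_nonneg fun t => sq_nonneg _))] with t ht
  simpa using ht

theorem exists_subseq_tendsto_integral_mul [IsSeparable μ]
    (hv : ∀ n, AEStronglyMeasurable (v n) μ) (hlo : MemLp lo 2 μ) (hhi : MemLp hi 2 μ)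
    (hlo_le : ∀ n, lo ≤ᵐ[μ] v n) (hle_hi : ∀ n, v n ≤ᵐ[μ] hi) :
    ∃ (w : α → ℝ) (φ : ℕ → ℕ), StrictMono φ ∧ Measurable w ∧ lo ≤ᵐ[μ] w ∧ w ≤ᵐ[μ] hi ∧
      ∀ g, MemLp g 2 μ →
        Tendsto (fun n => ∫ t, v (φ n) t * g t ∂μ) atTop (nhds (∫ t, w t * g t ∂μ)) := by
  have : Fact ((2 : ENNReal) ≠ ⊤) := ⟨by simp⟩
  have hbound : MemLp (fun t => |lo t| + |hi t|) 2 μ := hlo.abs.add hhi.abs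
  have hv_le (n : ℕ) : ∀ᵐ t ∂μ, ‖v n t‖ ≤ ‖|lo t| + |hi t|‖ := by
    filter_upwards [hlo_le n, hle_hi n] with t h₁ h₂
    rw [Real.norm_eq_abs, Real.norm_of_nonneg (by positivity), abs_le]
    constructor <;> linarith [neg_abs_le (lo t), le_abs_self (hi t), abs_nonneg (lo t),
      abs_nonneg (hi t)]
  have hvL (n : ℕ) : MemLp (v n) 2 μ := hbound.of_le (hv n) (hv_le n)
  obtain ⟨W, φ, hφ, hlim⟩ := exists_subseq_tendsto_inner (v := fun n => (hvL n).toLp)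
    (R := ‖hbound.toLp‖) fun n => Lp.norm_le_norm_of_ae_le <| by
      filter_upwards [hv_le n, (hvL n).coeFn_toLp, hbound.coeFn_toLp] with t ht h₁ h₂
      rwa [h₁, h₂]
  have hinner {f g : α → ℝ} (F : Lp ℝ 2 μ) (hF : F =ᵐ[μ] f) (hg : MemLp g 2 μ) :
      inner ℝ F hg.toLp = ∫ t, f t * g t ∂μ := by
    rw [L2.inner_def]
    refine integral_congr_ae ?_
    filter_upwards [hF, hg.coeFn_toLp] with t h₁ h₂
    simp [h₁, h₂, mul_comm]
  have hlim' (g : α → ℝ) (hg : MemLp g 2 μ) :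
      Tendsto (fun n => ∫ t, v (φ n) t * g t ∂μ) atTop (nhds (∫ t, W t * g t ∂μ)) := by
    simpa only [hinner _ (hvL _).coeFn_toLp hg, hinner W .rfl hg] using hlim hg.toLp
  refine ⟨W, φ, hφ, (Lp.stronglyMeasurable W).measurable, ?_,
    ae_le_of_tendsto_integral_mul (fun n => hvL (φ n)) (Lp.memLp W) hhi (fun n => hle_hi (φ n))
      hlim', hlim'⟩
  have hneg := ae_le_of_tendsto_integral_mul (fun n => (hvL (φ n)).neg) (Lp.memLp W).neg hlo.neg
    (fun n => (hlo_le (φ n)).mono fun t => neg_le_neg) fun g hg => by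
      simpa [integral_neg] using (hlim' g hg).neg
  exact hneg.mono fun t => neg_le_neg_iff.1

end WeakCompactness

theorem memLp_two_discount_const_mul_exp {A l κ : ℝ} (hκ : 2 * l < κ) :
    MemLp (fun t => A * Real.exp (l * t)) 2 (discount κ) := by
  rw [memLp_two_iff_integrable_sq (by fun_prop), integrable_discount_iff]
  refine ((integrableOn_exp_mul_Ioi (by linarith : 2 * l - κ < 0) 0).const_mul (A ^ 2)).congr
    (ae_of_all _ fun t => ?_)
  have hexp : Real.exp ((2 * l - κ) * t) = Real.exp (-κ * t) * Real.exp (l * t) ^ 2 := by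
    rw [← Real.exp_nat_mul, ← Real.exp_add]
    congr 1
    push_cast
    ring
  simp only [hexp]
  ring

theorem integral_discount_mul_indicator (κ T : ℝ) (f g : ℝ → ℝ) :
    ∫ t, f t * (Set.Icc 0 T).indicator (fun t => Real.exp (κ * t) * g t) t ∂discount κ =
      ∫ t in Set.Icc 0 T, f t * g t := by
  have hind : (fun t => Real.exp (-κ * t) *
      (f t * (Set.Icc 0 T).indicator (fun t => Real.exp (κ * t) * g t) t)) =
        (Set.Icc 0 T).indicator fun t => f t * g t := by
    ext t
    by_cases ht : t ∈ Set.Icc 0 T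
    · simp only [Set.indicator_of_mem ht, neg_mul, Real.exp_neg]
      field_simp
    · simp [ht]
  rw [integral_discount, hind, ← integral_Ici_eq_integral_Ioi,
    setIntegral_indicator measurableSet_Icc, Set.inter_eq_right.2 Set.Icc_subset_Ici_self]

theorem memLp_discount_indicator {κ T : ℝ} (hκ : 0 < κ) {g : ℝ → ℝ} (hg : Measurable g)
    (hgC : ∃ C, ∀ t ∈ Set.Icc 0 T, |g t| ≤ C) (p : ENNReal) :
    MemLp ((Set.Icc 0 T).indicator fun t => Real.exp (κ * t) * g t) p (discount κ) := by
  obtain ⟨C, hC⟩ := hgC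
  have := isFiniteMeasure_discount hκ
  refine MemLp.of_bound (Measurable.indicator (by fun_prop) measurableSet_Icc).aestronglyMeasurable
    (Real.exp (κ * T) * |C|) (ae_of_all _ fun t => ?_)
  by_cases ht : t ∈ Set.Icc 0 T
  · rw [Set.indicator_of_mem ht, norm_mul, Real.norm_of_nonneg (Real.exp_nonneg _)]
    gcongr
    · exact ht.2
    · exact (hC t ht).trans (le_abs_self C)
  · simpa [ht] using by positivity

theorem exists_subseq_tendsto_setIntegral {a A k l : ℝ} {v : ℕ → ℝ → ℝ}
    (hv : ∀ n, Measurable (v n))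
    (hlo : ∀ n t, 0 ≤ t → a * Real.exp (k * t) ≤ v n t)
    (hhi : ∀ n t, 0 ≤ t → v n t ≤ A * Real.exp (l * t)) :
    ∃ (w : ℝ → ℝ) (φ : ℕ → ℕ), StrictMono φ ∧ Measurable w ∧
      (∀ᵐ t ∂volume.restrict (Set.Ici 0),
        a * Real.exp (k * t) ≤ w t ∧ w t ≤ A * Real.exp (l * t)) ∧
      ∀ (T : ℝ) (g : ℝ → ℝ), Measurable g → (∃ C, ∀ t ∈ Set.Icc 0 T, |g t| ≤ C) →
        Tendsto (fun n => ∫ t in Set.Icc 0 T, v (φ n) t * g t) atTop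
          (nhds (∫ t in Set.Icc 0 T, w t * g t)) := by
  obtain ⟨κ, hκ, hk, hl⟩ : ∃ κ, 0 < κ ∧ 2 * k < κ ∧ 2 * l < κ := by
    refine ⟨2 * |k| + 2 * |l| + 1, by positivity, ?_, ?_⟩ <;>
      linarith [le_abs_self k, le_abs_self l, abs_nonneg k, abs_nonneg l]
  have := isFiniteMeasure_discount hκ
  obtain ⟨w, φ, hφ, hw, hlo_w, hw_hi, hlim⟩ := exists_subseq_tendsto_integral_mul
    (fun n => (hv n).aestronglyMeasurable) (memLp_two_discount_const_mul_exp hk)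
    (memLp_two_discount_const_mul_exp hl) (fun n => ae_discount_of_forall_nonneg (hlo n))
    (fun n => ae_discount_of_forall_nonneg (hhi n))
  refine ⟨w, φ, hφ, hw, ?_, fun T g hg hgC => ?_⟩
  · rw [← restrict_Ioi_eq_restrict_Ici]
    exact ae_discount_iff.1 (hlo_w.and hw_hi)
  · simpa only [integral_discount_mul_indicator] using
      hlim _ (memLp_discount_indicator hκ hg hgC 2)

/-! ### Concavity of the logarithm -/

section Log

variable {u v : ℝ}

theorem log_le_log_add_div (hu : 0 < u) (hv : 0 < v) :
    Real.log u ≤ Real.log v + (u - v) / v := by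
  have h := Real.log_le_sub_one_of_pos (div_pos hu hv)
  rw [Real.log_div hu.ne' hv.ne'] at h
  rw [sub_div, div_self hv.ne']
  linarith

theorem log_le_log_min_add_div (hu : 0 < u) (hv : 0 < v) :
    Real.log u ≤ Real.log (min u v) + (u - min u v) / v := by
  rcases le_total u v with huv | huv
  · simp [huv]
  · simpa [huv] using log_le_log_add_div hu hv

theorem log_add_div_le_log_max (hu : 0 < u) (hv : 0 < v) :
    Real.log u + (max u v - u) / v ≤ Real.log (max u v) := by
  rcases le_total u v with huv | huv
  · have h := log_le_log_add_div hu hv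
    rw [max_eq_right huv, ← neg_sub u v, neg_div]
    linarith
  · simp [huv]

theorem log_le_div_one_add_sq {c : ℝ} (hc : 0 < c) (hu : 0 < u) (y : ℝ) :
    Real.log u ≤ u / (1 + y ^ 2) + c / 2 * y ^ 2 + (c / 2 - 2 + Real.log (2 / c)) := by
  have hy : 0 < 1 + y ^ 2 := by positivity
  have h₁ := log_le_log_add_div hu hy
  have h₂ := log_le_log_add_div hy (div_pos two_pos hc)
  have e₁ : (u - (1 + y ^ 2)) / (1 + y ^ 2) = u / (1 + y ^ 2) - 1 := by field_simp
  have e₂ : (1 + y ^ 2 - 2 / c) / (2 / c) = c / 2 * (1 + y ^ 2) - 1 := by field_simp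
  linarith

end Log

/-- The drift of a dissipative dynamics with rate at most `b`: nonincreasing, `b`-Lipschitz, and
pointing inwards at the boundary of the state space `[0, ∞)`. -/
structure IsDissipative (b : NNReal) (F : ℝ → ℝ) : Prop where
  antitone : Antitone F
  lipschitz : LipschitzWith b F
  zero_nonneg : 0 ≤ F 0

namespace IsDissipative

variable {b : NNReal} {F : ℝ → ℝ} {y z : ℝ}

theorem of_deriv (hF : Differentiable ℝ F) (hF0 : 0 ≤ F 0)
    (hF' : ∀ y, -b ≤ deriv F y ∧ deriv F y ≤ 0) : IsDissipative b F where
  antitone := antitone_of_deriv_nonpos hF fun y => (hF' y).2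
  lipschitz := lipschitzWith_of_nnnorm_deriv_le hF fun y =>
    abs_le.2 ⟨(hF' y).1, (hF' y).2.trans b.2⟩
  zero_nonneg := hF0

theorem nonneg_of_nonpos (hF : IsDissipative b F) (hy : y ≤ 0) : 0 ≤ F y :=
  hF.zero_nonneg.trans (hF.antitone hy)

theorem sub_le_mul_sub (hF : IsDissipative b F) (hyz : y ≤ z) : F y - F z ≤ b * (z - y) := by
  have h := hF.lipschitz.dist_le_mul y z
  rw [dist_comm y z, Real.dist_eq, Real.dist_eq, abs_of_nonneg (sub_nonneg.2 hyz)] at h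
  exact (le_abs_self _).trans h

theorem neg_mul_le (hF : IsDissipative b F) (hy : 0 ≤ y) : -(b * y) ≤ F y := by
  have h := hF.sub_le_mul_sub hy
  have h₀ := hF.zero_nonneg
  rw [sub_zero] at h
  linarith

end IsDissipative

/-- A control–trajectory pair defined on all of `ℝ`, with the control positive at every `t ≥ 0`.
Every admissible pair agrees almost everywhere on `[0, ∞)` with such a pair, and absolute
continuity of `x` on the whole line spares one-sided conditions at `0`. -/
structure IsProcess (F : ℝ → ℝ) (x₀ : ℝ) (u x : ℝ → ℝ) : Prop where
  measurable : Measurable u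
  locallyIntegrable : LocallyIntegrable u
  pos : ∀ t, 0 ≤ t → 0 < u t
  initial : x 0 = x₀
  isPrimitive : IsPrimitive (fun t => F (x t) + u t) x

theorem locallyIntegrable_indicator_Ici {u : ℝ → ℝ}
    (hu : ∀ T, 0 < T → IntegrableOn u (Set.Icc 0 T)) :
    LocallyIntegrable ((Set.Ici 0).indicator u) := fun t => by
  refine ⟨Set.Icc (t - 1) (t + 1), Icc_mem_nhds (by linarith) (by linarith), ?_⟩
  rw [integrableOn_indicator_iff measurableSet_Ici]
  exact (hu (|t| + 1) (by positivity)).mono_set fun s hs =>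
    ⟨hs.1, hs.2.2.trans (by linarith [le_abs_self t])⟩

theorem Admissible.exists_locallyIntegrable {u : ℝ → ℝ} (hu : Admissible u) (C : ℝ) :
    ∃ u' : ℝ → ℝ, Measurable u' ∧ LocallyIntegrable u' ∧ (∀ t, 0 ≤ t → 0 < u' t) ∧
      (∀ t, t < 0 → u' t = C) ∧ ∀ᵐ t ∂volume.restrict (Set.Ici 0), u' t = u t := by
  obtain ⟨hmeas, hint, hpos⟩ := hu
  classical
  set p : ℝ → ℝ := fun t => if 0 < u t then u t else 1
  have hp_meas : Measurable p :=
    Measurable.ite (measurableSet_lt measurable_const hmeas) hmeas measurable_const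
  have hp_pos (t : ℝ) : 0 < p t := by
    by_cases h : 0 < u t <;> simp [p, h]
  have hpu : ∀ᵐ t ∂volume.restrict (Set.Ici 0), p t = u t := hpos.mono fun t ht => if_pos ht
  have hp_int (T : ℝ) (hT : 0 < T) : IntegrableOn p (Set.Icc 0 T) :=
    (hint T hT).congr_fun_ae (ae_restrict_of_ae_restrict_of_subset Set.Icc_subset_Ici_self
      (hpu.mono fun t => Eq.symm))
  refine ⟨fun t => (Set.Ici 0).indicator p t + (Set.Iio 0).indicator (fun _ => C) t,
    (hp_meas.indicator measurableSet_Ici).add (measurable_const.indicator measurableSet_Iio),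
    (locallyIntegrable_indicator_Ici hp_int).add
      ((locallyIntegrable_const C).indicator measurableSet_Iio),
    fun t ht => ?_, fun t ht => ?_, ?_⟩
  · simpa [ht, not_lt.2 ht] using hp_pos t
  · simp [ht]
  · filter_upwards [hpu, ae_restrict_mem measurableSet_Ici] with t htu (ht : 0 ≤ t)
    simpa [ht, not_lt.2 ht] using htu

theorem Admissible.exists_isProcess {F u x : ℝ → ℝ} {x₀ : ℝ} (hF : Continuous F)
    (hu : Admissible u) (hx : Trajectory F x₀ u x) :
    ∃ u' x', IsProcess F x₀ u' x' ∧ (∀ᵐ t ∂volume.restrict (Set.Ici 0), u' t = u t) ∧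
      ∀ t, 0 ≤ t → x' t = x t := by
  have hx_zero : x 0 = x₀ := by simp [hx.2 0 le_rfl]
  obtain ⟨u', hmeas, hloc, hpos, hneg, hae⟩ := hu.exists_locallyIntegrable (-F x₀)
  have hx'_cont : Continuous fun t => x (max t 0) :=
    hx.1.comp_continuous (by fun_prop) fun t => le_max_right t 0
  refine ⟨u', fun t => x (max t 0), ⟨hmeas, hloc, hpos, by simp [hx_zero],
    .of_eq_integral ((hF.comp hx'_cont).locallyIntegrable.add hloc) (C := x₀) fun t => ?_⟩, hae,
    fun t ht => by simp [ht]⟩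
  rcases le_total 0 t with ht | ht
  · rw [max_eq_left ht, hx.2 t ht]
    congr 1
    refine intervalIntegral.integral_congr_ae ((ae_restrict_iff' measurableSet_uIoc).1 ?_)
    rw [Set.uIoc_of_le ht]
    filter_upwards [ae_restrict_of_ae_restrict_of_subset
      (Set.Ioc_subset_Icc_self.trans Set.Icc_subset_Ici_self) hae,
      ae_restrict_mem measurableSet_Ioc] with s hs hs'
    rw [max_eq_left hs'.1.le, hs]
  · -- the control cancels the drift before time `0`, so that the state stays at `x₀`
    have hzero : ∫ s in (0 : ℝ)..t, (F (x (max s 0)) + u' s) = 0 := by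
      refine intervalIntegral.integral_zero_ae ?_
      filter_upwards [Measure.ae_ne volume 0] with s hs0 hs
      rw [Set.uIoc_of_ge ht] at hs
      rw [max_eq_right hs.2, hx_zero, hneg s (lt_of_le_of_ne hs.2 hs0), add_neg_cancel]
    rw [hzero, max_eq_right ht, hx_zero, add_zero]

theorem ObjIntegrable.congr {ρ c : ℝ} {u u' x x' : ℝ → ℝ} (h : ObjIntegrable ρ c u x)
    (hu : ∀ᵐ t ∂volume.restrict (Set.Ici 0), u' t = u t) (hx : ∀ t, 0 ≤ t → x' t = x t) :
    ObjIntegrable ρ c u' x' ∧ objective ρ c u' x' = objective ρ c u x := by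
  have hae : (fun t => Real.exp (-ρ * t) * (Real.log (u t) - c * x t ^ 2))
      =ᵐ[volume.restrict (Set.Ioi 0)]
        fun t => Real.exp (-ρ * t) * (Real.log (u' t) - c * x' t ^ 2) := by
    rw [restrict_Ioi_eq_restrict_Ici]
    filter_upwards [hu, ae_restrict_mem measurableSet_Ici] with t hut ht
    rw [hut, hx t ht]
  exact ⟨h.congr_fun_ae hae, (integral_congr_ae hae).symm⟩

/-! ### State estimates -/

namespace IsProcess

variable {F u x : ℝ → ℝ} {x₀ : ℝ} {b : NNReal}

theorem admissible (h : IsProcess F x₀ u x) : Admissible u :=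
  ⟨h.measurable, fun _ _ => h.locallyIntegrable.integrableOn_isCompact isCompact_Icc,
    (ae_restrict_mem measurableSet_Ici).mono h.pos⟩

theorem trajectory (h : IsProcess F x₀ u x) : Trajectory F x₀ u x :=
  ⟨h.isPrimitive.continuous.continuousOn, fun t _ => by
    rw [h.isPrimitive.integral_eq_sub, h.initial, add_sub_cancel]⟩

theorem continuous (h : IsProcess F x₀ u x) : Continuous x := h.isPrimitive.continuous

theorem intervalIntegrable_mul {E : ℝ → ℝ} (h : IsProcess F x₀ u x) (hE : Continuous E)
    (s t : ℝ) : IntervalIntegrable (fun r => E r * u r) volume s t :=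
  ((h.locallyIntegrable.integrableOn_isCompact
    isCompact_uIcc).intervalIntegrable).continuousOn_mul hE.continuousOn

theorem nonneg (h : IsProcess F x₀ u x) (hF : IsDissipative b F) (hx₀ : 0 ≤ x₀) {t : ℝ}
    (ht : 0 ≤ t) : 0 ≤ x t := by
  obtain ⟨s, ⟨⟨hs₀, hst⟩, hxs⟩, hlast⟩ :=
    (isCompact_Icc.inter_right (isClosed_Ici.preimage h.continuous)).exists_isGreatest
      ⟨0, ⟨le_rfl, ht⟩, by simpa [h.initial] using hx₀⟩
  have hneg (r : ℝ) (hr : r ∈ Set.Ioc s t) : x r ≤ 0 := by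
    by_contra! hxr
    exact hr.1.not_ge (hlast ⟨⟨hs₀.trans hr.1.le, hr.2⟩, hxr.le⟩)
  have hincr : 0 ≤ ∫ r in s..t, (F (x r) + u r) := by
    rw [intervalIntegral.integral_of_le hst]
    exact setIntegral_nonneg measurableSet_Ioc fun r hr =>
      add_nonneg (hF.nonneg_of_nonpos (hneg r hr)) (h.pos r (hs₀.trans hr.1.le)).le
  rw [h.isPrimitive.integral_eq_sub] at hincr
  exact le_trans hxs (sub_nonneg.1 hincr)

theorem integral_exp_mul_le (h : IsProcess F x₀ u x) (hF : IsDissipative b F) (hx₀ : 0 ≤ x₀)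
    {s t : ℝ} (hs : 0 ≤ s) (hst : s ≤ t) :
    ∫ r in s..t, Real.exp (b * r) * u r ≤ Real.exp (b * t) * x t - Real.exp (b * s) * x s := by
  refine ((isPrimitive_exp b).mul h.isPrimitive).integral_le_sub hst
    (h.intervalIntegrable_mul (by fun_prop) s t) fun r hr => ?_
  have hdrift := hF.neg_mul_le (h.nonneg hF hx₀ (hs.trans hr.1))
  nlinarith [Real.exp_pos (b * r)]

theorem state_le_exp_mul_state (h : IsProcess F x₀ u x) (hF : IsDissipative b F)
    (hx₀ : 0 ≤ x₀) {s t : ℝ} (hs : 0 ≤ s) (hst : s ≤ t) :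
    x s ≤ Real.exp (b * (t - s)) * x t := by
  have hmono : Real.exp (b * s) * x s ≤ Real.exp (b * t) * x t :=
    sub_nonneg.1 <| le_trans (intervalIntegral.integral_nonneg hst fun r hr =>
      mul_nonneg (Real.exp_nonneg _) (h.pos r (hs.trans hr.1)).le)
      (h.integral_exp_mul_le hF hx₀ hs hst)
  rwa [mul_sub, Real.exp_sub, div_mul_eq_mul_div, le_div_iff₀' (Real.exp_pos _)]

theorem mul_exp_le_state {a ρ : ℝ} (h : IsProcess F x₀ u x) (hF : IsDissipative b F)
    (hx₀ : 0 ≤ x₀) (ha : 0 ≤ a) (hρ : 0 ≤ ρ) (hu : ∀ t, 0 ≤ t → a * Real.exp (-ρ * t) ≤ u t)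
    {t : ℝ} (ht : 0 ≤ t) : a * t * Real.exp (-(b + ρ) * t) ≤ x t := by
  have hint : t * (a * Real.exp (-ρ * t)) ≤ ∫ r in (0 : ℝ)..t, Real.exp (b * r) * u r := by
    rw [← sub_zero t, ← smul_eq_mul, ← intervalIntegral.integral_const, sub_zero]
    refine intervalIntegral.integral_mono_on ht (by simp)
      (h.intervalIntegrable_mul (by fun_prop) 0 t) fun r hr => ?_
    have hexp : 1 ≤ Real.exp (b * r) := Real.one_le_exp (mul_nonneg b.2 hr.1)
    calc a * Real.exp (-ρ * t) ≤ a * Real.exp (-ρ * r) := by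
          refine mul_le_mul_of_nonneg_left (Real.exp_le_exp.2 ?_) ha
          nlinarith [hr.2]
      _ ≤ u r := hu r hr.1
      _ ≤ Real.exp (b * r) * u r := le_mul_of_one_le_left (h.pos r hr.1).le hexp
  have hvar := hint.trans (h.integral_exp_mul_le hF hx₀ le_rfl ht)
  have hx : t * (a * Real.exp (-ρ * t)) ≤ Real.exp (b * t) * x t := by
    simp only [mul_zero, Real.exp_zero, h.initial] at hvar
    linarith
  have hfactor : Real.exp (-(b + ρ) * t) = Real.exp (-(b * t)) * Real.exp (-ρ * t) := by
    rw [← Real.exp_add]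
    ring_nf
  calc a * t * Real.exp (-(b + ρ) * t)
      = Real.exp (-(b * t)) * (t * (a * Real.exp (-ρ * t))) := by rw [hfactor]; ring
    _ ≤ Real.exp (-(b * t)) * (Real.exp (b * t) * x t) := by gcongr
    _ = x t := by rw [← mul_assoc, ← Real.exp_add, neg_add_cancel, Real.exp_zero, one_mul]

theorem state_le_mul_exp {ρ K : ℝ} (h : IsProcess F x₀ u x) (hF : IsDissipative b F)
    (hx₀ : 0 ≤ x₀) (hρ : 0 < ρ) (hint : Integrable (fun t => x t ^ 2) (discount ρ))
    (hK : ∫ t, x t ^ 2 ∂discount ρ ≤ K) {t : ℝ} (ht : 0 ≤ t) :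
    x t ≤ Real.exp (b + ρ) * (1 / ρ + K) * Real.exp (ρ * t) := by
  have := isFiniteMeasure_discount hρ
  have hint' : Integrable (fun r => 1 + x r ^ 2) (discount ρ) := (integrable_const 1).add hint
  have hsum : ∫ r, (1 + x r ^ 2) ∂discount ρ ≤ 1 / ρ + K := by
    rw [integral_add (integrable_const 1) hint, integral_discount_const hρ]
    gcongr
  have hwindow : Real.exp (-(b + ρ + ρ * t)) * x t ≤ 1 / ρ + K := by
    refine le_trans ?_ ((intervalIntegral_le_integral_discount hint'
      (fun r _ => by positivity) ht (by linarith : t ≤ t + 1)).trans hsum)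
    have hconst (C : ℝ) : C = ∫ _ in t..t + 1, C := by simp
    rw [hconst (Real.exp _ * x t)]
    have hx_cont := h.continuous
    refine intervalIntegral.integral_mono_on (by linarith) (by simp)
      (Continuous.intervalIntegrable (by fun_prop) _ _) fun r hr => ?_
    have hr₀ : 0 ≤ r := ht.trans hr.1
    have hback : x t ≤ Real.exp b * x r := by
      refine (h.state_le_exp_mul_state hF hx₀ ht hr.1).trans ?_
      gcongr
      · exact h.nonneg hF hx₀ hr₀
      · exact mul_le_of_le_one_right b.2 (by linarith [hr.2])
    calc Real.exp (-(b + ρ + ρ * t)) * x t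
        ≤ Real.exp (-(b + ρ + ρ * t)) * (Real.exp b * x r) := by gcongr
      _ = Real.exp (-ρ * (t + 1)) * x r := by
          rw [← mul_assoc, ← Real.exp_add]
          ring_nf
      _ ≤ Real.exp (-ρ * r) * (1 + x r ^ 2) := by
          gcongr ?_ * ?_
          · exact h.nonneg hF hx₀ hr₀
          · exact Real.exp_le_exp.2 (by nlinarith [hr.2])
          · nlinarith [sq_nonneg (x r - 1)]
  calc x t = Real.exp (b + ρ + ρ * t) * (Real.exp (-(b + ρ + ρ * t)) * x t) := by
        rw [← mul_assoc, ← Real.exp_add, add_neg_cancel, Real.exp_zero, one_mul]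
    _ ≤ Real.exp (b + ρ + ρ * t) * (1 / ρ + K) := by gcongr
    _ = Real.exp (b + ρ) * (1 / ρ + K) * Real.exp (ρ * t) := by rw [Real.exp_add]; ring

end IsProcess

/-! ### A priori bounds from the objective -/

theorem lipschitzWith_one_arctan : LipschitzWith 1 Real.arctan :=
  lipschitzWith_of_nnnorm_deriv_le Real.differentiable_arctan fun y => by
    rw [← NNReal.coe_le_coe, coe_nnnorm, Real.deriv_arctan, Real.norm_of_nonneg (by positivity)]
    exact div_le_one_of_le₀ (by linarith [sq_nonneg y]) (by positivity)

namespace IsProcess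

variable {F u x : ℝ → ℝ} {x₀ ρ c : ℝ} {b : NNReal}

theorem intervalIntegrable_discount_mul_div (h : IsProcess F x₀ u x) (ρ s t : ℝ) :
    IntervalIntegrable (fun r => Real.exp (-ρ * r) * (u r / (1 + x r ^ 2))) volume s t := by
  have hcont : Continuous fun r => Real.exp (-ρ * r) / (1 + x r ^ 2) := by
    have := h.continuous
    exact .div₀ (by fun_prop) (by fun_prop) fun r => by positivity
  simpa only [div_mul_eq_mul_div, mul_div_assoc] using h.intervalIntegrable_mul hcont s t

theorem intervalIntegral_discount_mul_div_le (h : IsProcess F x₀ u x) (hF : IsDissipative b F)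
    (hx₀ : 0 ≤ x₀) (hρ : 0 < ρ) {T : ℝ} (hT : 0 ≤ T) :
    ∫ t in (0 : ℝ)..T, Real.exp (-ρ * t) * (u t / (1 + x t ^ 2)) ≤ Real.pi / 2 + b / ρ := by
  set D := Real.pi / 2 + b / ρ with hD
  have hprim := (isPrimitive_exp (-ρ)).mul (IsPrimitive.lipschitz_comp
    (φ := fun y => Real.arctan y - D) (lipschitzWith_one_arctan.sub (.const D))
    (fun y => (Real.hasDerivAt_arctan y).sub_const D) h.isPrimitive)
  refine (hprim.integral_le_sub hT (h.intervalIntegrable_discount_mul_div ρ 0 T)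
    fun t ht => ?_).trans ?_
  · have hx := h.nonneg hF hx₀ ht.1
    have hgap : b ≤ ρ * (D - Real.arctan (x t)) := by
      rw [hD, ← div_le_iff₀' hρ]
      linarith [Real.arctan_lt_pi_div_two (x t)]
    have hdrift : -b ≤ F (x t) / (1 + x t ^ 2) := by
      rw [le_div_iff₀ (by positivity)]
      nlinarith [hF.neg_mul_le hx, b.2, sq_nonneg (x t - 1), mul_nonneg b.2 (sq_nonneg (x t - 1))]
    calc Real.exp (-ρ * t) * (u t / (1 + x t ^ 2))
        ≤ Real.exp (-ρ * t) * (ρ * (D - Real.arctan (x t)) + F (x t) / (1 + x t ^ 2) +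
            u t / (1 + x t ^ 2)) := by gcongr; linarith
      _ = _ := by ring
  · have hfinal : Real.exp (-ρ * T) * (Real.arctan (x T) - D) ≤ 0 :=
      mul_nonpos_of_nonneg_of_nonpos (Real.exp_nonneg _) <| by
        rw [hD]
        linarith [Real.arctan_lt_pi_div_two (x T), div_nonneg b.coe_nonneg hρ.le]
    have hstart : 0 ≤ Real.arctan (x 0) := Real.arctan_nonneg.2 (by rwa [h.initial])
    simp only [mul_zero, Real.exp_zero, one_mul]
    linarith

theorem integrable_discount_div (h : IsProcess F x₀ u x) (hF : IsDissipative b F)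
    (hx₀ : 0 ≤ x₀) (hρ : 0 < ρ) : Integrable (fun t => u t / (1 + x t ^ 2)) (discount ρ) :=
  integrable_discount_of_intervalIntegral_le
    (h.intervalIntegrable_discount_mul_div ρ 0)
    (fun t ht => div_nonneg (h.pos t ht).le (by positivity))
    fun _ hT => h.intervalIntegral_discount_mul_div_le hF hx₀ hρ hT

theorem integral_discount_div_le (h : IsProcess F x₀ u x) (hF : IsDissipative b F)
    (hx₀ : 0 ≤ x₀) (hρ : 0 < ρ) :
    ∫ t, u t / (1 + x t ^ 2) ∂discount ρ ≤ Real.pi / 2 + b / ρ :=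
  integral_discount_le_of_intervalIntegral_le (h.integrable_discount_div hF hx₀ hρ)
    fun _ hT => h.intervalIntegral_discount_mul_div_le hF hx₀ hρ hT

theorem mul_sq_le_sub (h : IsProcess F x₀ u x) (hc : 0 < c) {t : ℝ} (ht : 0 ≤ t) :
    c / 2 * x t ^ 2 ≤
      u t / (1 + x t ^ 2) + (c / 2 - 2 + Real.log (2 / c)) - (Real.log (u t) - c * x t ^ 2) := by
  linarith [log_le_div_one_add_sq hc (h.pos t ht) (x t)]

theorem integrable_sq (h : IsProcess F x₀ u x) (hF : IsDissipative b F) (hx₀ : 0 ≤ x₀)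
    (hρ : 0 < ρ) (hc : 0 < c) (hobj : ObjIntegrable ρ c u x) :
    Integrable (fun t => x t ^ 2) (discount ρ) := by
  have := isFiniteMeasure_discount hρ
  have hbound := ((h.integrable_discount_div hF hx₀ hρ).add
    (integrable_const (c / 2 - 2 + Real.log (2 / c)))).sub (objIntegrable_iff.1 hobj)
  refine (hbound.const_mul (2 / c)).mono' (h.continuous.pow 2).aestronglyMeasurable
    (ae_discount_of_forall_nonneg fun t ht => ?_)
  rw [Real.norm_of_nonneg (sq_nonneg _), div_mul_eq_mul_div, le_div_iff₀' hc]
  have hle := h.mul_sq_le_sub hc ht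
  simp only [Pi.sub_apply, Pi.add_apply]
  linarith

theorem integral_sq_le (h : IsProcess F x₀ u x) (hF : IsDissipative b F) (hx₀ : 0 ≤ x₀)
    (hρ : 0 < ρ) (hc : 0 < c) (hobj : ObjIntegrable ρ c u x) :
    c / 2 * ∫ t, x t ^ 2 ∂discount ρ ≤
      Real.pi / 2 + b / ρ + (c / 2 - 2 + Real.log (2 / c)) / ρ - objective ρ c u x := by
  have := isFiniteMeasure_discount hρ
  have hdiv := h.integrable_discount_div hF hx₀ hρ
  have hobj' := objIntegrable_iff.1 hobj
  rw [← integral_const_mul, objective_eq_integral_discount,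
    ← integral_discount_const hρ (c / 2 - 2 + Real.log (2 / c))]
  refine (integral_mono_ae ((h.integrable_sq hF hx₀ hρ hc hobj).const_mul _)
    ((hdiv.add (integrable_const _)).sub hobj')
    (ae_discount_of_forall_nonneg fun t ht => h.mul_sq_le_sub hc ht)).trans ?_
  rw [integral_sub' (hdiv.add (integrable_const _)) hobj',
    integral_add' hdiv (integrable_const _)]
  gcongr
  exact h.integral_discount_div_le hF hx₀ hρ

theorem integrable_log (h : IsProcess F x₀ u x) (hF : IsDissipative b F) (hx₀ : 0 ≤ x₀)
    (hρ : 0 < ρ) (hc : 0 < c) (hobj : ObjIntegrable ρ c u x) :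
    Integrable (fun t => Real.log (u t)) (discount ρ) :=
  ((objIntegrable_iff.1 hobj).add ((h.integrable_sq hF hx₀ hρ hc hobj).const_mul c)).congr
    (ae_of_all _ fun _ => sub_add_cancel _ _)

theorem objIntegrable_of_le_log {f : ℝ → ℝ} (h : IsProcess F x₀ u x) (hF : IsDissipative b F)
    (hx₀ : 0 ≤ x₀) (hρ : 0 < ρ) (hc : 0 < c) (hsq : Integrable (fun t => x t ^ 2) (discount ρ))
    (hf : Integrable f (discount ρ)) (hle : ∀ t, 0 ≤ t → f t ≤ Real.log (u t)) :
    ObjIntegrable ρ c u x := by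
  have := isFiniteMeasure_discount hρ
  refine objIntegrable_iff.2 <| .sub ?_ (hsq.const_mul c)
  refine integrable_of_le_of_le (Real.measurable_log.comp h.measurable).aestronglyMeasurable
    (ae_discount_of_forall_nonneg hle) (ae_discount_of_forall_nonneg fun t ht =>
      log_le_div_one_add_sq hc (h.pos t ht) (x t)) hf ?_
  exact ((h.integrable_discount_div hF hx₀ hρ).add (hsq.const_mul _)).add (integrable_const _)

end IsProcess

/-! ### Lower bounds on the control -/

theorem locallyIntegrable_max {f g : ℝ → ℝ} (hf : LocallyIntegrable f) (hg : LocallyIntegrable g) :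
    LocallyIntegrable fun t => max (f t) (g t) := fun t => by
  obtain ⟨s, hs, hfs⟩ := hf t
  obtain ⟨s', hs', hgs⟩ := hg t
  exact ⟨s ∩ s', inter_mem hs hs', (hfs.mono_set Set.inter_subset_left).sup
    (hgs.mono_set Set.inter_subset_right)⟩

theorem locallyIntegrable_min {f g : ℝ → ℝ} (hf : LocallyIntegrable f) (hg : LocallyIntegrable g) :
    LocallyIntegrable fun t => min (f t) (g t) := fun t => by
  obtain ⟨s, hs, hfs⟩ := hf t
  obtain ⟨s', hs', hgs⟩ := hg t
  exact ⟨s ∩ s', inter_mem hs hs', (hfs.mono_set Set.inter_subset_left).inf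
    (hgs.mono_set Set.inter_subset_right)⟩

namespace IsProcess

variable {F u x : ℝ → ℝ} {x₀ ρ c : ℝ} {b : NNReal}

theorem perturb {w z : ℝ → ℝ} (h : IsProcess F x₀ u x) (hF : Continuous F) (hw : Measurable w)
    (hwz : IsPrimitive w z) (hz : z 0 = 0)
    (hpos : ∀ t, 0 ≤ t → 0 < u t + w t + (F (x t) - F (x t + z t))) :
    IsProcess F x₀ (fun t => u t + w t + (F (x t) - F (x t + z t))) fun t => x t + z t := by
  have hx := h.continuous
  have hz_cont := hwz.continuous
  have hcorr : Continuous fun t => F (x t) - F (x t + z t) := by fun_prop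
  exact
    { measurable := (h.measurable.add hw).add hcorr.measurable
      locallyIntegrable := (h.locallyIntegrable.add hwz.locallyIntegrable).add
        hcorr.locallyIntegrable
      pos := hpos
      initial := by rw [h.initial, hz, add_zero]
      isPrimitive := (h.isPrimitive.add hwz).congr_deriv fun t => by ring }

theorem exists_max_le {η : ℝ → ℝ} (h : IsProcess F x₀ u x) (hF : IsDissipative b F)
    (hη : Continuous η) :
    ∃ u' x', IsProcess F x₀ u' x' ∧ (∀ t, 0 ≤ t → max (u t) (η t) ≤ u' t) ∧
      ∀ t, x' t = x t + ∫ s in (0 : ℝ)..t, (max (u s) (η s) - u s) := by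
  have hprim : IsPrimitive (fun t => max (u t) (η t) - u t) _ :=
    .of_eq_integral ((locallyIntegrable_max h.locallyIntegrable hη.locallyIntegrable).sub
      h.locallyIntegrable) (C := 0) fun t => (zero_add _).symm
  have hle (t : ℝ) (ht : 0 ≤ t) : max (u t) (η t) ≤ u t + (max (u t) (η t) - u t) +
      (F (x t) - F (x t + ∫ s in (0 : ℝ)..t, (max (u s) (η s) - u s))) := by
    have hz := intervalIntegral.integral_nonneg (μ := volume) ht fun s _ =>
      sub_nonneg.2 (le_max_left (u s) (η s))
    linarith [hF.antitone (le_add_of_nonneg_right hz : x t ≤ x t + _)]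
  exact ⟨_, _, h.perturb hF.lipschitz.continuous
    ((h.measurable.max hη.measurable).sub h.measurable) hprim (by simp)
    fun t ht => (lt_max_of_lt_left (h.pos t ht)).trans_le (hle t ht), hle, fun _ => rfl⟩

theorem integrable_exp_mul_max_sub {a : ℝ} (h : IsProcess F x₀ u x) (hρ : 0 < ρ) (ha : 0 ≤ a) :
    Integrable (fun t => Real.exp (ρ * t) * (max (u t) (a * Real.exp (-ρ * t)) - u t))
      (discount ρ) ∧
    ∫ t, Real.exp (ρ * t) * (max (u t) (a * Real.exp (-ρ * t)) - u t) ∂discount ρ ≤ a / ρ := by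
  have := isFiniteMeasure_discount hρ
  have hu := h.measurable
  have hlo (t : ℝ) : 0 ≤ Real.exp (ρ * t) * (max (u t) (a * Real.exp (-ρ * t)) - u t) :=
    mul_nonneg (Real.exp_nonneg _) (sub_nonneg.2 (le_max_left _ _))
  have hhi (t : ℝ) (ht : 0 ≤ t) :
      Real.exp (ρ * t) * (max (u t) (a * Real.exp (-ρ * t)) - u t) ≤ a := by
    have hη : max (u t) (a * Real.exp (-ρ * t)) - u t ≤ a * Real.exp (-ρ * t) := by
      rw [sub_le_iff_le_add]
      exact max_le (le_add_of_nonneg_left (by positivity)) (by linarith [h.pos t ht])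
    calc _ ≤ Real.exp (ρ * t) * (a * Real.exp (-ρ * t)) := by gcongr
      _ = a := by
          rw [mul_left_comm, ← Real.exp_add, neg_mul, add_neg_cancel, Real.exp_zero, mul_one]
  have hint : Integrable _ (discount ρ) := integrable_of_le_of_le (by fun_prop) (ae_of_all _ hlo)
    (ae_discount_of_forall_nonneg hhi) (integrable_const 0) (integrable_const a)
  refine ⟨hint, ?_⟩
  rw [← integral_discount_const hρ]
  exact integral_mono_ae hint (integrable_const a) (ae_discount_of_forall_nonneg hhi)

end IsProcess

theorem objective_le_of_add_le {ρ c : ℝ} {u x u' x' f : ℝ → ℝ} (hobj : ObjIntegrable ρ c u x)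
    (hobj' : ObjIntegrable ρ c u' x') (hf : Integrable f (discount ρ))
    (hf0 : 0 ≤ ∫ t, f t ∂discount ρ) (hle : ∀ t, 0 ≤ t →
      Real.log (u t) - c * x t ^ 2 + f t ≤ Real.log (u' t) - c * x' t ^ 2) :
    objective ρ c u x ≤ objective ρ c u' x' := by
  rw [objIntegrable_iff] at hobj hobj'
  rw [objective_eq_integral_discount, objective_eq_integral_discount]
  refine (le_add_of_nonneg_right hf0).trans ?_
  rw [← integral_add hobj hf]
  exact integral_mono_ae (hobj.add hf) hobj' (ae_discount_of_forall_nonneg hle)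

namespace IsProcess

variable {F u x : ℝ → ℝ} {x₀ ρ c : ℝ} {b : NNReal}

theorem exists_mul_exp_le_gain {a : ℝ} (h : IsProcess F x₀ u x) (hF : IsDissipative b F)
    (hρ : 0 < ρ) (ha : 0 < a) :
    ∃ u' x' m : ℝ → ℝ, IsProcess F x₀ u' x' ∧ (∀ t, 0 ≤ t → a * Real.exp (-ρ * t) ≤ u' t) ∧
      Integrable m (discount ρ) ∧ (∀ t, 0 ≤ m t) ∧ ∫ t, m t ∂discount ρ ≤ a / ρ ∧
      ∀ t, 0 ≤ t → Real.log (u t) + m t / a ≤ Real.log (u' t) ∧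
        x' t ≤ x t + ∫ s, m s ∂discount ρ := by
  obtain ⟨u', x', h', hu', hx'⟩ := h.exists_max_le hF
    (η := fun t => a * Real.exp (-ρ * t)) (by fun_prop)
  obtain ⟨hm, hm_le⟩ := h.integrable_exp_mul_max_sub hρ ha.le
  have hm0 (t : ℝ) : 0 ≤ Real.exp (ρ * t) * (max (u t) (a * Real.exp (-ρ * t)) - u t) :=
    mul_nonneg (Real.exp_nonneg _) (sub_nonneg.2 (le_max_left _ _))
  have hexp (t : ℝ) : Real.exp (-ρ * t) * Real.exp (ρ * t) = 1 := by
    rw [← Real.exp_add, neg_mul, neg_add_cancel, Real.exp_zero]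
  refine ⟨u', x', _, h', fun t ht => (le_max_right _ _).trans (hu' t ht), hm, hm0, hm_le,
    fun t ht => ⟨?_, ?_⟩⟩
  · have hη : 0 < a * Real.exp (-ρ * t) := by positivity
    have hratio (y : ℝ) : Real.exp (ρ * t) * y / a = y / (a * Real.exp (-ρ * t)) := by
      rw [div_eq_div_iff ha.ne' hη.ne']
      linear_combination y * a * hexp t
    rw [hratio]
    exact (log_add_div_le_log_max (h.pos t ht) hη).trans
      (Real.log_le_log (lt_max_of_lt_right hη) (hu' t ht))
  · rw [hx']
    gcongr
    simpa only [← mul_assoc, hexp, one_mul] using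
      intervalIntegral_le_integral_discount hm (fun t _ => hm0 t) le_rfl ht

theorem exists_mul_exp_le {a K : ℝ} (h : IsProcess F x₀ u x) (hF : IsDissipative b F)
    (hx₀ : 0 ≤ x₀) (hρ : 0 < ρ) (hc : 0 < c) (hobj : ObjIntegrable ρ c u x)
    (hK : ∫ t, x t ^ 2 ∂discount ρ ≤ K) (ha : 0 < a) (haρ : a ≤ ρ)
    (haK : a * (c * (K + 2 / ρ)) ≤ 1) :
    ∃ u' x', IsProcess F x₀ u' x' ∧ (∀ t, 0 ≤ t → a * Real.exp (-ρ * t) ≤ u' t) ∧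
      ObjIntegrable ρ c u' x' ∧ objective ρ c u x ≤ objective ρ c u' x' := by
  have := isFiniteMeasure_discount hρ
  obtain ⟨u', x', m, h', hu', hm, hm0, hm_le, hlog_le⟩ := h.exists_mul_exp_le_gain hF hρ ha
  set Z := ∫ t, m t ∂discount ρ
  have hZ0 : 0 ≤ Z := integral_nonneg hm0
  have hZ1 : Z ≤ 1 := hm_le.trans ((div_le_one hρ).2 haρ)
  have hsq (t : ℝ) (ht : 0 ≤ t) : x' t ^ 2 ≤ x t ^ 2 + Z * (x t ^ 2 + 2) := by
    calc x' t ^ 2 ≤ (x t + Z) ^ 2 := by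
          gcongr
          exacts [h'.nonneg hF hx₀ ht, (hlog_le t ht).2]
      _ ≤ x t ^ 2 + Z * (x t ^ 2 + 2) := by nlinarith [mul_nonneg hZ0 (sq_nonneg (x t - 1))]
  have hx_int := h.integrable_sq hF hx₀ hρ hc hobj
  have hcost : Integrable (fun t => Z * (x t ^ 2 + 2)) (discount ρ) :=
    (hx_int.add (integrable_const 2)).const_mul Z
  have hx'_int : Integrable (fun t => x' t ^ 2) (discount ρ) := integrable_of_le_of_le
    (h'.continuous.pow 2).aestronglyMeasurable (ae_of_all _ fun t => sq_nonneg (x' t))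
    (ae_discount_of_forall_nonneg hsq) (integrable_zero _ _ _) (hx_int.add hcost)
  have hobj' : ObjIntegrable ρ c u' x' := h'.objIntegrable_of_le_log hF hx₀ hρ hc hx'_int
    (h.integrable_log hF hx₀ hρ hc hobj) fun t ht =>
      (le_add_of_nonneg_right (div_nonneg (hm0 t) ha.le)).trans (hlog_le t ht).1
  have hbalance : 0 ≤ ∫ t, (m t / a - c * (Z * (x t ^ 2 + 2))) ∂discount ρ := by
    rw [integral_sub (hm.div_const a) (hcost.const_mul c), integral_div, integral_const_mul,
      integral_const_mul, integral_add hx_int (integrable_const 2), integral_discount_const hρ,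
      sub_nonneg, le_div_iff₀ ha]
    calc c * (Z * (∫ t, x t ^ 2 ∂discount ρ + 2 / ρ)) * a
        ≤ c * (Z * (K + 2 / ρ)) * a := by gcongr
      _ = Z * (a * (c * (K + 2 / ρ))) := by ring
      _ ≤ Z := mul_le_of_le_one_right hZ0 haK
  exact ⟨u', x', h', hu', hobj', objective_le_of_add_le hobj hobj'
    ((hm.div_const a).sub (hcost.const_mul c)) hbalance fun t ht => by
      simp only [Pi.sub_apply]
      linarith [(hlog_le t ht).1, mul_le_mul_of_nonneg_left (hsq t ht) hc.le]⟩

end IsProcess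

/-! ### Upper bounds on the control -/

theorem objective_le_of_isPrimitive {ρ c : ℝ} {u x u' x' f q : ℝ → ℝ}
    (hobj : ObjIntegrable ρ c u x) (hobj' : ObjIntegrable ρ c u' x') (hq : IsPrimitive f q)
    (hlim : Tendsto q atTop (nhds (q 0))) (hle : ∀ t, 0 ≤ t →
      Real.exp (-ρ * t) * (Real.log (u t) - c * x t ^ 2) ≤
        Real.exp (-ρ * t) * (Real.log (u' t) - c * x' t ^ 2) + f t) :
    objective ρ c u x ≤ objective ρ c u' x' := by
  have hint {u x : ℝ → ℝ} (h : ObjIntegrable ρ c u x) {T : ℝ} (hT : 0 ≤ T) : IntervalIntegrable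
      (fun t => Real.exp (-ρ * t) * (Real.log (u t) - c * x t ^ 2)) volume 0 T :=
    (intervalIntegrable_iff_integrableOn_Ioc_of_le hT).2 (h.mono_set Set.Ioc_subset_Ioi_self)
  have hsum := (intervalIntegral_tendsto_integral_Ioi 0 hobj' tendsto_id).add (hlim.sub_const (q 0))
  rw [sub_self, add_zero] at hsum
  refine le_of_tendsto_of_tendsto (intervalIntegral_tendsto_integral_Ioi 0 hobj tendsto_id) hsum
    ((eventually_ge_atTop 0).mono fun T hT => ?_)
  simp only [id_eq, ← hq.integral_eq_sub]
  rw [← intervalIntegral.integral_add (hint hobj' hT) (hq.intervalIntegrable 0 T)]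
  exact intervalIntegral.integral_mono_on hT (hint hobj hT)
    ((hint hobj' hT).add (hq.intervalIntegrable 0 T)) fun t ht => hle t ht.1

theorem min_log_zero_le_log_min {u N : ℝ} (hN : 1 ≤ N) :
    min (Real.log u) 0 ≤ Real.log (min u N) := by
  rcases le_total u N with huN | huN
  · simp [huN]
  · simpa [huN] using Or.inr (Real.log_nonneg hN)

theorem mul_log_sub_sq_le {c e m N p u v x z : ℝ} (hc : 0 ≤ c) (he : 0 ≤ e) (hu : 0 < u)
    (hN : 0 < N) (hv : min u N ≤ v) (hz : 0 ≤ z) (hzx : z ≤ x) (hpN : e ≤ p * N)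
    (hmx : m ≤ c * e * x) :
    e * (Real.log u - c * x ^ 2) ≤
      e * (Real.log v - c * (x - z) ^ 2) + (p * (u - min u N) - m * z) := by
  have hlog : Real.log u ≤ Real.log v + (u - min u N) / N :=
    (log_le_log_min_add_div hu hN).trans (by gcongr)
  have hcut : e * ((u - min u N) / N) ≤ p * (u - min u N) := by
    rw [← mul_div_assoc, div_le_iff₀ hN, mul_right_comm]
    exact mul_le_mul_of_nonneg_right hpN (sub_nonneg.2 (min_le_left u N))
  have hstate : m * z ≤ e * (c * (x ^ 2 - (x - z) ^ 2)) :=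
    calc m * z ≤ c * e * x * z := by gcongr
      _ = e * (c * (x * z)) := by ring
      _ ≤ e * (c * (x ^ 2 - (x - z) ^ 2)) := by gcongr; nlinarith
  linarith [mul_le_mul_of_nonneg_left hlog he]

theorem isPrimitive_exp_neg_mul_integral {f : ℝ → ℝ} (hf : LocallyIntegrable f) (k : ℝ) :
    IsPrimitive (fun t => f t - k * (Real.exp (-k * t) * ∫ s in (0 : ℝ)..t, Real.exp (k * s) * f s))
      fun t => Real.exp (-k * t) * ∫ s in (0 : ℝ)..t, Real.exp (k * s) * f s := by
  have hloc : LocallyIntegrable fun s => Real.exp (k * s) * f s := by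
    rw [← locallyIntegrableOn_univ] at hf ⊢
    exact hf.continuousOn_mul (by fun_prop) isOpen_univ.isLocallyClosed
  refine ((isPrimitive_exp (-k)).mul (.of_eq_integral hloc (C := 0) fun t =>
    (zero_add _).symm)).congr_deriv fun t => ?_
  have hexp : Real.exp (-k * t) * Real.exp (k * t) = 1 := by
    rw [← Real.exp_add, neg_mul, neg_add_cancel, Real.exp_zero]
  linear_combination f t * hexp

namespace IsProcess

variable {F u x : ℝ → ℝ} {x₀ ρ c : ℝ} {b : NNReal}

theorem exp_neg_mul_integral_le_state {f : ℝ → ℝ} (h : IsProcess F x₀ u x)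
    (hF : IsDissipative b F) (hx₀ : 0 ≤ x₀) (hf : LocallyIntegrable f)
    (hfu : ∀ t, 0 ≤ t → f t ≤ u t) {t : ℝ} (ht : 0 ≤ t) :
    Real.exp (-b * t) * ∫ s in (0 : ℝ)..t, Real.exp (b * s) * f s ≤ x t := by
  have hint : IntervalIntegrable (fun s => Real.exp (b * s) * f s) volume 0 t :=
    (hf.integrableOn_isCompact isCompact_uIcc).intervalIntegrable.continuousOn_mul (by fun_prop)
  have hle : ∫ s in (0 : ℝ)..t, Real.exp (b * s) * f s ≤ Real.exp (b * t) * x t := by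
    refine (intervalIntegral.integral_mono_on ht hint (h.intervalIntegrable_mul (by fun_prop) 0 t)
      fun s hs => mul_le_mul_of_nonneg_left (hfu s hs.1) (Real.exp_nonneg _)).trans
      ((h.integral_exp_mul_le hF hx₀ le_rfl ht).trans ?_)
    simpa [h.initial] using hx₀
  rwa [neg_mul, Real.exp_neg, inv_mul_le_iff₀ (Real.exp_pos _)]

theorem exists_min_le {N : ℝ → ℝ} (h : IsProcess F x₀ u x) (hF : IsDissipative b F)
    (hx₀ : 0 ≤ x₀) (hN : Continuous N) (hN_pos : ∀ t, 0 ≤ t → 0 < N t) :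
    ∃ u' z, IsProcess F x₀ u' (fun t => x t - z t) ∧ z 0 = 0 ∧
      IsPrimitive (fun t => u t - min (u t) (N t) - b * z t) z ∧
      ∀ t, 0 ≤ t → 0 ≤ z t ∧ z t ≤ x t ∧
        min (u t) (N t) ≤ u' t ∧ u' t ≤ min (u t) (N t) + b * z t := by
  have hloc : LocallyIntegrable fun t => u t - min (u t) (N t) :=
    h.locallyIntegrable.sub (locallyIntegrable_min h.locallyIntegrable hN.locallyIntegrable)
  have hz := isPrimitive_exp_neg_mul_integral hloc b
  set z := fun t => Real.exp (-b * t) *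
    ∫ s in (0 : ℝ)..t, Real.exp (b * s) * (u s - min (u s) (N s)) with hz_def
  have hz0 (t : ℝ) (ht : 0 ≤ t) : 0 ≤ z t :=
    mul_nonneg (Real.exp_nonneg _) <| intervalIntegral.integral_nonneg ht fun s _ =>
      mul_nonneg (Real.exp_nonneg _) (sub_nonneg.2 (min_le_left _ _))
  have hzx (t : ℝ) (ht : 0 ≤ t) : z t ≤ x t :=
    h.exp_neg_mul_integral_le_state hF hx₀ hloc (fun s hs =>
      sub_le_self _ (le_min (h.pos s hs).le (hN_pos s hs).le)) ht
  have hmin (t : ℝ) (ht : 0 ≤ t) : 0 < min (u t) (N t) := lt_min (h.pos t ht) (hN_pos t ht)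
  have hdrift (t : ℝ) (ht : 0 ≤ t) :
      -(b * z t) ≤ F (x t) - F (x t + -z t) ∧ F (x t) - F (x t + -z t) ≤ 0 := by
    have hle : x t + -z t ≤ x t := by linarith [hz0 t ht]
    have hlip := hF.sub_le_mul_sub hle
    exact ⟨by linarith, sub_nonpos.2 (hF.antitone hle)⟩
  have hmeas : Measurable fun t => -(u t - min (u t) (N t) - b * z t) :=
    ((h.measurable.sub (h.measurable.min hN.measurable)).sub
      (hz.continuous.measurable.const_mul _)).neg
  have hperturb := h.perturb hF.lipschitz.continuous hmeas hz.neg (by simp [hz_def]) fun t ht => by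
    linarith [(hdrift t ht).1, hmin t ht]
  exact ⟨_, z, hperturb, by simp [hz_def], hz, fun t ht => ⟨hz0 t ht, hzx t ht,
    by linarith [(hdrift t ht).1], by linarith [(hdrift t ht).2]⟩⟩

theorem objIntegrable_of_min_le {u' x' N : ℝ → ℝ} (h : IsProcess F x₀ u x)
    (hF : IsDissipative b F) (hx₀ : 0 ≤ x₀) (hρ : 0 < ρ) (hc : 0 < c)
    (hobj : ObjIntegrable ρ c u x) (h' : IsProcess F x₀ u' x') (hN : ∀ t, 0 ≤ t → 1 ≤ N t)
    (hu' : ∀ t, 0 ≤ t → min (u t) (N t) ≤ u' t) (hx' : ∀ t, 0 ≤ t → x' t ≤ x t) :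
    ObjIntegrable ρ c u' x' := by
  have hsq : Integrable (fun t => x' t ^ 2) (discount ρ) := integrable_of_le_of_le
    (h'.continuous.pow 2).aestronglyMeasurable (ae_of_all _ fun t => sq_nonneg (x' t))
    (ae_discount_of_forall_nonneg fun t ht =>
      pow_le_pow_left₀ (h'.nonneg hF hx₀ ht) (hx' t ht) 2)
    (integrable_zero _ _ _) (h.integrable_sq hF hx₀ hρ hc hobj)
  exact h'.objIntegrable_of_le_log hF hx₀ hρ hc hsq
    ((h.integrable_log hF hx₀ hρ hc hobj).inf (integrable_zero _ _ _)) fun t ht =>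
      (min_log_zero_le_log_min (hN t ht)).trans
        (Real.log_le_log (lt_min (h.pos t ht) (one_pos.trans_le (hN t ht))) (hu' t ht))

theorem exists_le_of_multiplier {N m p : ℝ → ℝ} (h : IsProcess F x₀ u x)
    (hF : IsDissipative b F) (hx₀ : 0 ≤ x₀) (hρ : 0 < ρ) (hc : 0 < c)
    (hobj : ObjIntegrable ρ c u x) (hN : Continuous N) (hN_one : ∀ t, 0 ≤ t → 1 ≤ N t)
    (hp : ∀ t, HasDerivAt p (b * p t - m t) t) (hm : Continuous m) (hp0 : ∀ t, 0 ≤ t → 0 ≤ p t)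
    (hpN : ∀ t, 0 ≤ t → Real.exp (-ρ * t) ≤ p t * N t)
    (hmx : ∀ t, 0 ≤ t → m t ≤ c * Real.exp (-ρ * t) * x t)
    (hlim : Tendsto (fun t => p t * x t) atTop (nhds 0)) :
    ∃ u' x', IsProcess F x₀ u' x' ∧ ObjIntegrable ρ c u' x' ∧
      objective ρ c u x ≤ objective ρ c u' x' ∧
      ∀ t, 0 ≤ t → min (u t) (N t) ≤ u' t ∧ u' t ≤ N t + b * x t := by
  have hN_pos (t : ℝ) (ht : 0 ≤ t) : 0 < N t := one_pos.trans_le (hN_one t ht)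
  obtain ⟨u', z, h', hz_zero, hz, hz_bounds⟩ := h.exists_min_le hF hx₀ hN hN_pos
  have hobj' := h.objIntegrable_of_min_le hF hx₀ hρ hc hobj h' hN_one
    (fun t ht => (hz_bounds t ht).2.2.1) fun t ht => sub_le_self _ (hz_bounds t ht).1
  have hp_cont : Continuous p := continuous_iff_continuousAt.2 fun t => (hp t).continuousAt
  have hpz : IsPrimitive (fun t => p t * (u t - min (u t) (N t)) - m t * z t)
      (fun t => p t * z t) :=
    ((IsPrimitive.of_hasDerivAt hp (by fun_prop)).mul hz).congr_deriv fun t => by ring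
  refine ⟨u', _, h', hobj', objective_le_of_isPrimitive hobj hobj' hpz ?_ fun t ht => ?_,
    fun t ht => ?_⟩
  · rw [hz_zero, mul_zero]
    refine tendsto_of_tendsto_of_tendsto_of_le_of_le' tendsto_const_nhds hlim
      ((eventually_ge_atTop 0).mono fun t ht => mul_nonneg (hp0 t ht) (hz_bounds t ht).1)
      ((eventually_ge_atTop 0).mono fun t ht =>
        mul_le_mul_of_nonneg_left (hz_bounds t ht).2.1 (hp0 t ht))
  · obtain ⟨hz0, hzx, hu', -⟩ := hz_bounds t ht
    exact mul_log_sub_sq_le hc.le (Real.exp_nonneg _) (h.pos t ht) (hN_pos t ht) hu' hz0 hzx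
      (hpN t ht) (hmx t ht)
  · obtain ⟨-, hzx, hu', hu'_le⟩ := hz_bounds t ht
    exact ⟨hu', hu'_le.trans (add_le_add (min_le_right _ _) (mul_le_mul_of_nonneg_left hzx b.2))⟩

end IsProcess

/-- The multiplier penalising the upper truncation at `A e^{(b+ρ)t}`. It is the positive solution,
with initial value `ε`, of the adjoint equation `p' = b p - 4ε(b+ρ)² t e^{-(b+2ρ)t}`; the last term
is of the order of the discounted marginal cost of any state `x` with `x t ≥ a t e^{-(b+ρ)t}`. -/
noncomputable def multiplier (b ρ ε t : ℝ) : ℝ :=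
  ε * (1 + 2 * (b + ρ) * t) * Real.exp (-(b + 2 * ρ) * t)

section Multiplier

variable {b ρ ε : ℝ}

theorem hasDerivAt_multiplier (b ρ ε t : ℝ) :
    HasDerivAt (multiplier b ρ ε) (b * multiplier b ρ ε t -
      4 * ε * (b + ρ) ^ 2 * t * Real.exp (-(b + 2 * ρ) * t)) t := by
  unfold multiplier
  refine (((((hasDerivAt_id' t).const_mul (2 * (b + ρ))).const_add 1).const_mul ε).fun_mul
    ((hasDerivAt_id' t).const_mul (-(b + 2 * ρ))).exp).congr_deriv ?_
  ring

theorem multiplier_nonneg (hε : 0 ≤ ε) (hbρ : 0 ≤ b + ρ) {t : ℝ} (ht : 0 ≤ t) :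
    0 ≤ multiplier b ρ ε t := by
  unfold multiplier
  positivity

theorem exp_le_multiplier_mul {A : ℝ} (hbρ : 0 ≤ b + ρ) (hA : 1 ≤ ε * A) {t : ℝ} (ht : 0 ≤ t) :
    Real.exp (-ρ * t) ≤ multiplier b ρ ε t * (A * Real.exp ((b + ρ) * t)) := by
  have hexp : Real.exp (-ρ * t) = Real.exp (-(b + 2 * ρ) * t) * Real.exp ((b + ρ) * t) := by
    rw [← Real.exp_add]
    ring_nf
  calc Real.exp (-ρ * t) ≤ Real.exp (-ρ * t) * ((1 + 2 * (b + ρ) * t) * (ε * A)) :=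
        le_mul_of_one_le_right (Real.exp_nonneg _) <| one_le_mul_of_one_le_of_one_le
          (le_add_of_nonneg_right (by positivity)) hA
    _ = multiplier b ρ ε t * (A * Real.exp ((b + ρ) * t)) := by
        rw [hexp, multiplier]
        ring

theorem tendsto_multiplier_mul_exp (hbρ : 0 < b + ρ) (ε : ℝ) :
    Tendsto (fun t => multiplier b ρ ε t * Real.exp (ρ * t)) atTop (nhds 0) := by
  have hdecay (n : ℕ) :
      Tendsto (fun t : ℝ => t ^ n * Real.exp (-(b + ρ) * t)) atTop (nhds 0) := by
    simpa using tendsto_rpow_mul_exp_neg_mul_atTop_nhds_zero n (b + ρ) hbρ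
  have hlim := ((hdecay 0).const_mul ε).add ((hdecay 1).const_mul (ε * (2 * (b + ρ))))
  simp only [mul_zero, add_zero] at hlim
  refine hlim.congr fun t => ?_
  have hexp : Real.exp (-(b + ρ) * t) = Real.exp (-(b + 2 * ρ) * t) * Real.exp (ρ * t) := by
    rw [← Real.exp_add]
    ring_nf
  rw [hexp, multiplier]
  ring

end Multiplier

/-! ### Uniform bounds and the maximizing sequence -/

namespace IsProcess

variable {F u x : ℝ → ℝ} {x₀ ρ c : ℝ} {b : NNReal}

theorem multiplier_source_le {a ε : ℝ} (h : IsProcess F x₀ u x) (hF : IsDissipative b F)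
    (hx₀ : 0 ≤ x₀) (hρ : 0 ≤ ρ) (hc : 0 ≤ c) (ha : 0 ≤ a)
    (hu : ∀ t, 0 ≤ t → a * Real.exp (-ρ * t) ≤ u t) (hε : 4 * ε * (b + ρ) ^ 2 = c * a)
    {t : ℝ} (ht : 0 ≤ t) :
    4 * ε * (b + ρ) ^ 2 * t * Real.exp (-(b + 2 * ρ) * t) ≤ c * Real.exp (-ρ * t) * x t := by
  have hexp : Real.exp (-(b + 2 * ρ) * t) = Real.exp (-ρ * t) * Real.exp (-(b + ρ) * t) := by
    rw [← Real.exp_add]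
    ring_nf
  calc 4 * ε * (b + ρ) ^ 2 * t * Real.exp (-(b + 2 * ρ) * t)
      = c * Real.exp (-ρ * t) * (a * t * Real.exp (-(b + ρ) * t)) := by rw [hε, hexp]; ring
    _ ≤ c * Real.exp (-ρ * t) * x t := by
        gcongr
        exact h.mul_exp_le_state hF hx₀ ha hρ hu ht

theorem tendsto_multiplier_mul_state {C ε : ℝ} (h : IsProcess F x₀ u x) (hF : IsDissipative b F)
    (hx₀ : 0 ≤ x₀) (hbρ : 0 < b + ρ) (hε : 0 ≤ ε)
    (hx : ∀ t, 0 ≤ t → x t ≤ C * Real.exp (ρ * t)) :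
    Tendsto (fun t => multiplier b ρ ε t * x t) atTop (nhds 0) := by
  refine tendsto_of_tendsto_of_tendsto_of_le_of_le' tendsto_const_nhds
    (by simpa using (tendsto_multiplier_mul_exp hbρ ε).const_mul C)
    ((eventually_ge_atTop 0).mono fun t ht =>
      mul_nonneg (multiplier_nonneg hε hbρ.le ht) (h.nonneg hF hx₀ ht))
    ((eventually_ge_atTop 0).mono fun t ht => ?_)
  rw [mul_left_comm]
  exact mul_le_mul_of_nonneg_left (hx t ht) (multiplier_nonneg hε hbρ.le ht)

theorem exists_le_mul_exp {a A C : ℝ} (h : IsProcess F x₀ u x) (hF : IsDissipative b F)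
    (hx₀ : 0 ≤ x₀) (hρ : 0 < ρ) (hc : 0 < c) (hobj : ObjIntegrable ρ c u x) (ha : 0 < a)
    (hu : ∀ t, 0 ≤ t → a * Real.exp (-ρ * t) ≤ u t) (hx : ∀ t, 0 ≤ t → x t ≤ C * Real.exp (ρ * t))
    (hA_one : 1 ≤ A) (haA : a ≤ A) (hA : 4 * (b + ρ) ^ 2 ≤ c * a * A) :
    ∃ u' x', IsProcess F x₀ u' x' ∧ ObjIntegrable ρ c u' x' ∧
      objective ρ c u x ≤ objective ρ c u' x' ∧ ∀ t, 0 ≤ t →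
        a * Real.exp (-ρ * t) ≤ u' t ∧ u' t ≤ (A + b * C) * Real.exp ((b + ρ) * t) := by
  have hbρ : 0 < b + ρ := add_pos_of_nonneg_of_pos b.2 hρ
  have hgrow (t : ℝ) (ht : 0 ≤ t) : 1 ≤ Real.exp ((b + ρ) * t) := Real.one_le_exp (by positivity)
  obtain ⟨ε, hε0, hε, hεA⟩ : ∃ ε : ℝ, 0 ≤ ε ∧ 4 * ε * (b + ρ) ^ 2 = c * a ∧ 1 ≤ ε * A := by
    refine ⟨c * a / (4 * (b + ρ) ^ 2), by positivity, by field_simp, ?_⟩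
    rwa [div_mul_eq_mul_div, le_div_iff₀ (by positivity), one_mul]
  obtain ⟨u', x', h', hobj', hle, hbounds⟩ := h.exists_le_of_multiplier hF hx₀ hρ hc hobj
    (N := fun t => A * Real.exp ((b + ρ) * t)) (by fun_prop)
    (fun t ht => one_le_mul_of_one_le_of_one_le hA_one (hgrow t ht)) (hasDerivAt_multiplier b ρ ε)
    (by fun_prop) (fun t ht => multiplier_nonneg hε0 hbρ.le ht)
    (fun t ht => exp_le_multiplier_mul hbρ.le hεA ht)
    (fun t ht => h.multiplier_source_le hF hx₀ hρ.le hc.le ha.le hu hε ht)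
    (h.tendsto_multiplier_mul_state hF hx₀ hbρ hε0 hx)
  refine ⟨u', x', h', hobj', hle, fun t ht => ⟨?_, ?_⟩⟩
  · have hdecay : Real.exp (-ρ * t) ≤ 1 := Real.exp_le_one_iff.2 (by nlinarith)
    exact (le_min (hu t ht) (mul_le_mul haA (hdecay.trans (hgrow t ht)) (Real.exp_nonneg _)
      (ha.le.trans haA))).trans (hbounds t ht).1
  · have hC : 0 ≤ C := by simpa using (h.nonneg hF hx₀ le_rfl).trans (hx 0 le_rfl)
    calc u' t ≤ A * Real.exp ((b + ρ) * t) + b * x t := (hbounds t ht).2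
      _ ≤ A * Real.exp ((b + ρ) * t) + b * (C * Real.exp ((b + ρ) * t)) := by
          gcongr
          refine (hx t ht).trans ?_
          gcongr
          exact le_add_of_nonneg_left b.2
      _ = (A + b * C) * Real.exp ((b + ρ) * t) := by ring

end IsProcess

section Assembly

variable {F : ℝ → ℝ} {x₀ ρ c V : ℝ} {b : NNReal}

theorem exists_integral_sq_le (hF : IsDissipative b F) (hx₀ : 0 ≤ x₀) (hρ : 0 < ρ) (hc : 0 < c)
    (B₀ : ℝ) : ∃ K, 0 ≤ K ∧ ∀ u x, IsProcess F x₀ u x → ObjIntegrable ρ c u x →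
      B₀ ≤ objective ρ c u x → ∫ t, x t ^ 2 ∂discount ρ ≤ K := by
  set M := Real.pi / 2 + b / ρ + (c / 2 - 2 + Real.log (2 / c)) / ρ - B₀
  refine ⟨max (M / (c / 2)) 0, le_max_right _ _, fun u x h hobj hB₀ => le_max_of_le_left ?_⟩
  rw [le_div_iff₀' (half_pos hc)]
  exact (h.integral_sq_le hF hx₀ hρ hc hobj).trans (sub_le_sub_left hB₀ _)

theorem exists_uniformly_bounded_improvement (hF : IsDissipative b F) (hx₀ : 0 ≤ x₀)
    (hρ : 0 < ρ) (hc : 0 < c) (B₀ : ℝ) :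
    ∃ a A, 0 < a ∧ ∀ u x, IsProcess F x₀ u x → ObjIntegrable ρ c u x → B₀ ≤ objective ρ c u x →
      ∃ u' x', IsProcess F x₀ u' x' ∧ ObjIntegrable ρ c u' x' ∧
        objective ρ c u x ≤ objective ρ c u' x' ∧ ∀ t, 0 ≤ t →
          a * Real.exp (-ρ * t) ≤ u' t ∧ u' t ≤ A * Real.exp ((b + ρ) * t) := by
  obtain ⟨K, hK0, hK⟩ := exists_integral_sq_le hF hx₀ hρ hc B₀
  have hcost : 0 < c * (K + 2 / ρ) := by positivity
  set a := min ρ (1 / (c * (K + 2 / ρ)))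
  have ha : 0 < a := lt_min hρ (by positivity)
  set A := max (max 1 a) (4 * (b + ρ) ^ 2 / (c * a))
  refine ⟨a, A + b * (Real.exp (b + ρ) * (1 / ρ + K)), ha, fun u x h hobj hB₀ => ?_⟩
  obtain ⟨u₁, x₁, h₁, hu₁, hobj₁, hle₁⟩ := h.exists_mul_exp_le hF hx₀ hρ hc hobj (hK u x h hobj hB₀)
    ha (min_le_left _ _) ((le_div_iff₀ hcost).1 (min_le_right _ _))
  obtain ⟨u₂, x₂, h₂, hobj₂, hle₂, hbounds⟩ := h₁.exists_le_mul_exp hF hx₀ hρ hc hobj₁ ha hu₁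
    (fun t ht => h₁.state_le_mul_exp hF hx₀ hρ (h₁.integrable_sq hF hx₀ hρ hc hobj₁)
      (hK u₁ x₁ h₁ hobj₁ (hB₀.trans hle₁)) ht) (le_max_of_le_left (le_max_left 1 a))
    (le_max_of_le_left (le_max_right 1 a))
    ((div_le_iff₀' (by positivity)).1 (le_max_right (max 1 a) (4 * (b + ρ) ^ 2 / (c * a))))
  exact ⟨u₂, x₂, h₂, hobj₂, hle₁.trans hle₂, hbounds⟩

theorem exists_uniformly_bounded_maximizing_sequence (hF : IsDissipative b F) (hx₀ : 0 ≤ x₀)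
    (hρ : 0 < ρ) (hc : 0 < c)
    (hV : IsLUB {r : ℝ | ∃ u x : ℝ → ℝ, Admissible u ∧ Trajectory F x₀ u x ∧
      ObjIntegrable ρ c u x ∧ objective ρ c u x = r} V) :
    ∃ (a A : ℝ) (v xs : ℕ → ℝ → ℝ), 0 < a ∧
      (∀ n, IsProcess F x₀ (v n) (xs n) ∧ ObjIntegrable ρ c (v n) (xs n)) ∧
      (∀ n t, 0 ≤ t →
        a * Real.exp (-ρ * t) ≤ v n t ∧ v n t ≤ A * Real.exp ((b + ρ) * t)) ∧
      Tendsto (fun n => objective ρ c (v n) (xs n)) atTop (nhds V) := by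
  obtain ⟨a, A, ha, himprove⟩ := exists_uniformly_bounded_improvement hF hx₀ hρ hc (V - 1)
  have hmax (n : ℕ) : ∃ v x, IsProcess F x₀ v x ∧ ObjIntegrable ρ c v x ∧
      V - 1 / (n + 1) ≤ objective ρ c v x ∧ ∀ t, 0 ≤ t →
        a * Real.exp (-ρ * t) ≤ v t ∧ v t ≤ A * Real.exp ((b + ρ) * t) := by
    have hn : 0 < 1 / ((n : ℝ) + 1) := by positivity
    obtain ⟨-, ⟨u, x, hu, hx, hobj, rfl⟩, hVu, -⟩ := hV.exists_between (sub_lt_self V hn)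
    obtain ⟨u₁, x₁, h₁, hu₁, hx₁⟩ := hu.exists_isProcess hF.lipschitz.continuous hx
    obtain ⟨hobj₁, hobj_eq⟩ := hobj.congr hu₁ hx₁
    rw [← hobj_eq] at hVu
    have hn_le : 1 / ((n : ℝ) + 1) ≤ 1 := div_le_one_of_le₀ (by simp) (by positivity)
    obtain ⟨v, y, hv, hobj_v, hle, hbounds⟩ := himprove u₁ x₁ h₁ hobj₁ (by linarith)
    exact ⟨v, y, hv, hobj_v, hVu.le.trans hle, hbounds⟩
  choose v xs hv hobj hVv hbounds using hmax
  refine ⟨a, A, v, xs, ha, fun n => ⟨hv n, hobj n⟩, hbounds, ?_⟩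
  refine tendsto_of_tendsto_of_tendsto_of_le_of_le
    (by simpa using tendsto_one_div_add_atTop_nhds_zero_nat.const_sub V) tendsto_const_nhds hVv
    fun n => hV.1 ⟨_, _, (hv n).admissible, (hv n).trajectory, hobj n, rfl⟩

theorem admissible_of_ae_bounds {a A k l : ℝ} {w : ℝ → ℝ} (ha : 0 < a) (hw : Measurable w)
    (hbounds : ∀ᵐ t ∂volume.restrict (Set.Ici 0),
      a * Real.exp (k * t) ≤ w t ∧ w t ≤ A * Real.exp (l * t)) : Admissible w := by
  refine ⟨hw, fun T _ => ?_, hbounds.mono fun t ht => (mul_pos ha (Real.exp_pos _)).trans_le ht.1⟩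
  have hbounds_T := ae_restrict_of_ae_restrict_of_subset
    (Set.Icc_subset_Ici_self : Set.Icc 0 T ⊆ _) hbounds
  exact integrable_of_le_of_le hw.aestronglyMeasurable (hbounds_T.mono fun t => And.left)
    (hbounds_T.mono fun t => And.right) (Continuous.integrableOn_Icc (by fun_prop))
    (Continuous.integrableOn_Icc (by fun_prop))

theorem mul_exp_le_and_le_mul_exp_of_mem_Icc {a A k y t T : ℝ} (ha : 0 ≤ a) (hρ : 0 ≤ ρ)
    (hk : 0 ≤ k) (ht : t ∈ Set.Icc 0 T)
    (hy : a * Real.exp (-ρ * t) ≤ y ∧ y ≤ A * Real.exp (k * t)) :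
    a * Real.exp (-ρ * T) ≤ y ∧ y ≤ A * Real.exp (k * T) := by
  have hA : 0 ≤ A := nonneg_of_mul_nonneg_left
    ((mul_nonneg ha (Real.exp_nonneg _)).trans (hy.1.trans hy.2)) (Real.exp_pos _)
  refine ⟨le_trans ?_ hy.1, hy.2.trans ?_⟩
  · exact mul_le_mul_of_nonneg_left (Real.exp_le_exp.2 (by nlinarith [ht.2])) ha
  · gcongr
    exact ht.2

theorem diagonal_maximizing_sequence_general (hF : IsDissipative b F) (hx₀ : 0 ≤ x₀)
    (hρ : 0 < ρ) (hc : 0 < c)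
    (hV : IsLUB {r : ℝ | ∃ u x : ℝ → ℝ, Admissible u ∧ Trajectory F x₀ u x ∧
      ObjIntegrable ρ c u x ∧ objective ρ c u x = r} V) :
    ∃ (v : ℕ → ℝ → ℝ) (vl : ℝ → ℝ) (xs : ℕ → ℝ → ℝ) (η N : ℕ → ℝ),
      (∀ n : ℕ, Admissible (v n) ∧ Trajectory F x₀ (v n) (xs n) ∧
        ObjIntegrable ρ c (v n) (xs n)) ∧
      Admissible vl ∧
      (∀ T : ℕ, 0 < η T ∧ η T ≤ N T) ∧
      Tendsto (fun n => objective ρ c (v n) (xs n)) atTop (nhds V) ∧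
      (∀ T : ℝ, 0 < T → ∀ g : ℝ → ℝ, Measurable g →
        (∃ C : ℝ, ∀ t ∈ Set.Icc (0:ℝ) T, |g t| ≤ C) →
        Tendsto (fun n => ∫ t in Set.Icc (0:ℝ) T, v n t * g t) atTop
          (nhds (∫ t in Set.Icc (0:ℝ) T, vl t * g t))) ∧
      (∀ T : ℕ, ∀ᵐ t ∂(volume.restrict (Set.Icc (0:ℝ) (T:ℝ))),
        (η T ≤ vl t ∧ vl t ≤ N T) ∧
        ∀ n : ℕ, T ≤ n → η T ≤ v n t ∧ v n t ≤ N T) := by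
  obtain ⟨a, A, v, xs, ha, hv, hbounds, hmax⟩ :=
    exists_uniformly_bounded_maximizing_sequence hF hx₀ hρ hc hV
  obtain ⟨vl, φ, hφ, hvl, hvl_bounds, hweak⟩ := exists_subseq_tendsto_setIntegral
    (fun n => (hv n).1.measurable) (fun n t ht => (hbounds n t ht).1)
    fun n t ht => (hbounds n t ht).2
  refine ⟨fun n => v (φ n), vl, fun n => xs (φ n), fun T => a * Real.exp (-ρ * T),
    fun T => A * Real.exp ((b + ρ) * T),
    fun n => ⟨(hv (φ n)).1.admissible, (hv (φ n)).1.trajectory, (hv (φ n)).2⟩,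
    admissible_of_ae_bounds ha hvl hvl_bounds,
    fun T => ⟨by positivity, (hbounds 0 T T.cast_nonneg).1.trans (hbounds 0 T T.cast_nonneg).2⟩,
    hmax.comp hφ.tendsto_atTop, fun T _ g hg hgC => hweak T g hg hgC, fun T => ?_⟩
  have hIcc {t : ℝ} (ht : t ∈ Set.Icc (0 : ℝ) T) (y : ℝ) :=
    mul_exp_le_and_le_mul_exp_of_mem_Icc (A := A) (y := y) ha.le hρ.le
      (add_nonneg b.2 hρ.le) ht
  filter_upwards [ae_restrict_of_ae_restrict_of_subset Set.Icc_subset_Ici_self hvl_bounds,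
    ae_restrict_mem measurableSet_Icc] with t hvl_t ht
  exact ⟨hIcc ht _ hvl_t, fun n _ => hIcc ht _ (hbounds (φ n) t ht.1)⟩

end Assembly

/-- Existence of a locally uniformly bounded maximizing sequence converging
weakly in every `L¹([0,T])` to an admissible control. -/
theorem diagonal_maximizing_sequence
    (ρ c x₀ b₀ l V : ℝ) (F : ℝ → ℝ)
    (hρ : 0 < ρ) (hc : 0 < c) (hx₀ : 0 ≤ x₀) (hb₀ : 0 < b₀) (hl : 0 < l)
    (hF : ContDiff ℝ 1 F) (hF0 : F 0 = 0) (hF'0 : deriv F 0 < 0)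
    (hF' : ∀ y : ℝ, -b₀ ≤ deriv F y ∧ deriv F y ≤ 0)
    (hFlim : Tendsto (deriv F) atTop (nhds (-l)))
    (hV : IsLUB {r : ℝ | ∃ u x : ℝ → ℝ, Admissible u ∧ Trajectory F x₀ u x ∧
            ObjIntegrable ρ c u x ∧ objective ρ c u x = r} V) :
    ∃ (v : ℕ → ℝ → ℝ) (vl : ℝ → ℝ) (xs : ℕ → ℝ → ℝ) (η N : ℕ → ℝ),
      (∀ n : ℕ, Admissible (v n) ∧ Trajectory F x₀ (v n) (xs n) ∧
        ObjIntegrable ρ c (v n) (xs n)) ∧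
      Admissible vl ∧
      (∀ T : ℕ, 0 < η T ∧ η T ≤ N T) ∧
      Tendsto (fun n => objective ρ c (v n) (xs n)) atTop (nhds V) ∧
      (∀ T : ℝ, 0 < T → ∀ g : ℝ → ℝ, Measurable g →
        (∃ C : ℝ, ∀ t ∈ Set.Icc (0:ℝ) T, |g t| ≤ C) →
        Tendsto (fun n => ∫ t in Set.Icc (0:ℝ) T, v n t * g t) atTop
          (nhds (∫ t in Set.Icc (0:ℝ) T, vl t * g t))) ∧
      (∀ T : ℕ, ∀ᵐ t ∂(volume.restrict (Set.Icc (0:ℝ) (T:ℝ))),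
        (η T ≤ vl t ∧ vl t ≤ N T) ∧
        ∀ n : ℕ, T ≤ n → η T ≤ v n t ∧ v n t ≤ N T) :=
  have hdiss : IsDissipative ⟨b₀, hb₀.le⟩ F := .of_deriv (hF.differentiable one_ne_zero) hF0.ge hF'
  diagonal_maximizing_sequence_general hdiss hx₀ hρ hc hV
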